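/- arXiv:1209.6084 — 3 statements merged into one kernel-verified Lean document; each statement's English description precedes it below -/
import Mathlib

section
/- For traceless n×n matrices a, b over F (F = ℝ or ℂ, n ≥ 2), the Killing form of sl(n,F) satisfies ⟨a,b⟩ = 2n·tr(ab). -/
/-!
On all `n × n` matrices, `ad A ∘ ad B` sends `X` to `ABX + XBA - AXB - BXA`. Since `X ↦ CXD` is the
Kronecker product of `C` and `Dᵀ`, its trace is `tr C * tr D`, and so the Killing form of `gl(n)` is
`2n tr(AB) - 2 tr A tr B`. Finally `sl(n)` is an ideal of `gl(n)`, so its Killing form is the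
restriction of this one, and on `sl(n)` the second term vanishes.
-/

section Trace

variable {n R : Type*} [Fintype n] [CommRing R]

lemma trace_mulLeft_comp_mulRight (A B : Matrix n n R) :
    LinearMap.trace R _ (LinearMap.mulLeft R A ∘ₗ LinearMap.mulRight R B) =
      A.trace * B.trace := by
  classical
  have diag_apply (i j : n) :
      (A * (Matrix.single i j 1 * B) : Matrix n n R) i j = A i i * B j j := by
    simp [Matrix.mul_apply, Matrix.single_apply, ite_and]
  have repr_apply (M : Matrix n n R) (i j : n) : (Matrix.stdBasis R n n).repr M (i, j) = M i j := by
    simp [Matrix.stdBasis]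
  simp [LinearMap.trace_eq_matrix_trace R (Matrix.stdBasis R n n), Matrix.trace,
    LinearMap.toMatrix_apply, Matrix.stdBasis_eq_single, repr_apply, diag_apply,
    Fintype.sum_prod_type, Finset.sum_mul_sum]

lemma trace_mulLeft_matrix (A : Matrix n n R) :
    LinearMap.trace R _ (LinearMap.mulLeft R A) = Fintype.card n * A.trace := by
  classical
  simpa [mul_comm] using trace_mulLeft_comp_mulRight A 1

lemma trace_mulRight_matrix (A : Matrix n n R) :
    LinearMap.trace R _ (LinearMap.mulRight R A) = Fintype.card n * A.trace := by
  classical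
  simpa using trace_mulLeft_comp_mulRight 1 A

end Trace

section KillingForm

attribute [local instance] LieRing.ofAssociativeRing

lemma ad_comp_ad_eq_mulLeft_add_mulRight_sub {R A : Type*} [CommRing R] [Ring A] [Algebra R A]
    (a b : A) :
    LieAlgebra.ad R A a ∘ₗ LieAlgebra.ad R A b =
      LinearMap.mulLeft R (a * b) + LinearMap.mulRight R (b * a)
        - LinearMap.mulLeft R a ∘ₗ LinearMap.mulRight R b
        - LinearMap.mulLeft R b ∘ₗ LinearMap.mulRight R a := by
  ext x
  simp only [LinearMap.comp_apply, LinearMap.add_apply, LinearMap.sub_apply,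
    LinearMap.mulLeft_apply, LinearMap.mulRight_apply, LieAlgebra.ad_apply,
    LieRing.of_associative_ring_bracket]
  noncomm_ring

lemma killingForm_matrix_apply {n R : Type*} [Fintype n] [DecidableEq n] [CommRing R]
    (A B : Matrix n n R) :
    killingForm R (Matrix n n R) A B =
      2 * Fintype.card n * (A * B).trace - 2 * (A.trace * B.trace) := by
  rw [killingForm_apply_apply, ad_comp_ad_eq_mulLeft_add_mulRight_sub]
  simp only [map_add, map_sub, trace_mulLeft_comp_mulRight, trace_mulLeft_matrix,
    trace_mulRight_matrix, Matrix.trace_mul_comm B A]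
  ring

lemma killingForm_lieSubalgebra_eq_restrict {R L : Type*} [CommRing R] [IsDomain R]
    [IsPrincipalIdealRing R] [LieRing L] [LieAlgebra R L] [Module.Free R L] [Module.Finite R L]
    {H : LieSubalgebra R L} (hH : ∀ x y : L, y ∈ H → ⁅x, y⁆ ∈ H) :
    killingForm R H = (killingForm R L).restrict H.toSubmodule := by
  obtain ⟨I, rfl⟩ := (LieSubalgebra.exists_lieIdeal_coe_eq_iff R H).mpr hH
  exact I.killingForm_eq

open LieAlgebra.SpecialLinear in
theorem stmt9_general {n R : Type*} [Fintype n] [DecidableEq n] [CommRing R] [IsDomain R]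
    [IsPrincipalIdealRing R] (a b : sl n R) :
    killingForm R (sl n R) a b =
      2 * (Fintype.card n : R) * Matrix.trace ((a : Matrix n n R) * (b : Matrix n n R)) := by
  have lie_mem_sl (x y : Matrix n n R) (_ : y ∈ sl n R) : ⁅x, y⁆ ∈ sl n R :=
    LieAlgebra.matrix_trace_commutator_zero n R x y
  have trace_a : (a : Matrix n n R).trace = 0 := a.2
  calc killingForm R (sl n R) a b
      = killingForm R (Matrix n n R) a b :=
        LinearMap.congr_fun₂ (killingForm_lieSubalgebra_eq_restrict lie_mem_sl) a b
    _ = 2 * (Fintype.card n : R) * Matrix.trace ((a : Matrix n n R) * (b : Matrix n n R)) := by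
        rw [killingForm_matrix_apply, trace_a, zero_mul, mul_zero, sub_zero]

end KillingForm

open LieAlgebra.SpecialLinear in
/-- For traceless `n × n` matrices `a`, `b` over `F = ℝ` or `ℂ` (`n ≥ 2`), the Killing form
of `sl(n,F)` satisfies `⟨a,b⟩ = 2n · tr(ab)`. -/
theorem stmt9 {F : Type*} [RCLike F] (n : ℕ) (hn : 2 ≤ n)
    (a b : sl (Fin n) F) :
    killingForm F (sl (Fin n) F) a b =
      2 * (n : F) *
        Matrix.trace ((a : Matrix (Fin n) (Fin n) F) * (b : Matrix (Fin n) (Fin n) F)) := by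
  simpa using stmt9_general a b
end

section
/- Every a ∈ su(l,j) with a² = 0 is SU(l,j)-conjugate to t·a for every real t > 0; consequently, 0 lies in the closure of the SU(l,j)-adjoint orbit of a. -/
/-
As in the Jacobson–Morozov theorem, `a` has a partner `f`, again skew-adjoint for the form, with
`a f a = a`, `f a f = f` and `f² = 0`. Then `a f` and `f a` are orthogonal idempotents, adjoint to
each other, so scaling the range of `a f` by `s` and that of `f a` by `s⁻¹` is an isometry which
conjugates `a` to `s² a`. Its determinant is `1` because `1 + c a f` and `1 + c f a` have the same
determinant for every scalar `c`.
-/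

open Matrix

/-- The diagonal matrix of the Hermitian form of signature `(l, n − l)` on `ℂⁿ`. -/
noncomputable def etaMat (l n : ℕ) : Matrix (Fin n) (Fin n) ℂ :=
  Matrix.diagonal fun i => if (i : ℕ) < l then (1 : ℂ) else -1

section FormAdjoint

variable {A : Type*} [Ring A] [StarRing A] {J x x' y y' : A}

/-- `y` is an adjoint of `x` for the sesquilinear form with Gram matrix `J`, that is
`⟨x v, w⟩ = ⟨v, y w⟩` where `⟨v, w⟩ = v* J w`. In particular `IsFormAdjoint J a (-a)` says that `a`
is skew-adjoint. A relation is used since, for degenerate `J`, adjoints need neither exist nor be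
unique. -/
def IsFormAdjoint (J x y : A) : Prop :=
  star x * J = J * y

namespace IsFormAdjoint

theorem one (J : A) : IsFormAdjoint J 1 1 := by
  rw [IsFormAdjoint, star_one, one_mul, mul_one]

theorem add (h : IsFormAdjoint J x y) (h' : IsFormAdjoint J x' y') :
    IsFormAdjoint J (x + x') (y + y') := by
  rw [IsFormAdjoint, star_add, add_mul, mul_add, h, h']

theorem sub (h : IsFormAdjoint J x y) (h' : IsFormAdjoint J x' y') :
    IsFormAdjoint J (x - x') (y - y') := by
  rw [IsFormAdjoint, star_sub, sub_mul, mul_sub, h, h']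

theorem mul (h : IsFormAdjoint J x y) (h' : IsFormAdjoint J x' y') :
    IsFormAdjoint J (x * x') (y' * y) := by
  rw [IsFormAdjoint, star_mul, mul_assoc, h, ← mul_assoc, h', mul_assoc]

theorem smul {R : Type*} [CommRing R] [StarRing R] [TrivialStar R] [Algebra R A] [StarModule R A]
    (r : R) (h : IsFormAdjoint J x y) : IsFormAdjoint J (r • x) (r • y) := by
  rw [IsFormAdjoint, star_smul, star_trivial, smul_mul_assoc, mul_smul_comm, h]

theorem symm (hJ : IsSelfAdjoint J) (h : IsFormAdjoint J x y) : IsFormAdjoint J y x := by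
  simpa only [IsFormAdjoint, star_mul, star_star, hJ.star_eq] using (congrArg star h).symm

theorem unique (hJ : IsUnit J) (h : IsFormAdjoint J x y) (h' : IsFormAdjoint J x y') : y = y' :=
  hJ.mul_left_cancel (Eq.trans (Eq.symm h) h')

theorem exists_of_isUnit (hJ : IsUnit J) (x : A) : ∃ y, IsFormAdjoint J x y := by
  obtain ⟨u, rfl⟩ := hJ
  exact ⟨↑u⁻¹ * (star x * u), Eq.symm (u.mul_inv_cancel_left (star x * u))⟩

end IsFormAdjoint

end FormAdjoint

section Opposite

variable {A : Type*} [Ring A]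

/-- `f` is a square-zero generalised inverse of the square-zero element `a`. Then
`(a, a f - f a, f)` is an `sl₂`-triple in which `a f` and `f a` are orthogonal idempotents,
projecting onto the weight spaces `1` and `-1`. -/
structure IsOpposite (a f : A) : Prop where
  left_mul_self : a * a = 0
  right_mul_self : f * f = 0
  left_mul_right_mul_left : a * f * a = a
  right_mul_left_mul_right : f * a * f = f

variable {R : Type*} [CommRing R] [Algebra R A]

/-- The one-parameter group of the `sl₂`-triple of an opposite pair `a`, `f`: multiplication by `s`
on the range of `a f`, by `s⁻¹` on the range of `f a`, and by `1` on the common kernel of `a` and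
`f`. -/
def weightScaling (a f : A) (s : Rˣ) : A :=
  1 + ((s : R) - 1) • (a * f) + ((↑s⁻¹ : R) - 1) • (f * a)

theorem weightScaling_swap_inv (a f : A) (s : Rˣ) :
    weightScaling f a s⁻¹ = weightScaling a f s := by
  rw [weightScaling, inv_inv, add_right_comm, weightScaling]

theorem weightScaling_inv (a f : A) (s : Rˣ) :
    weightScaling a f s⁻¹ = 1 + ((↑s⁻¹ : R) - 1) • (a * f) + ((s : R) - 1) • (f * a) := by
  rw [weightScaling, inv_inv]

theorem IsFormAdjoint.weightScaling [StarRing A] [StarRing R] [TrivialStar R] [StarModule R A]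
    {J a f : A} (ha : IsFormAdjoint J a (-a)) (hf : IsFormAdjoint J f (-f)) (s : Rˣ) :
    IsFormAdjoint J (weightScaling a f s) (weightScaling a f s⁻¹) := by
  have h_af : IsFormAdjoint J (a * f) (f * a) := by simpa only [neg_mul_neg] using ha.mul hf
  have h_fa : IsFormAdjoint J (f * a) (a * f) := by simpa only [neg_mul_neg] using hf.mul ha
  rw [← weightScaling_swap_inv a f s⁻¹, inv_inv]
  exact ((one J).add (h_af.smul _)).add (h_fa.smul _)

namespace IsOpposite

variable {a f : A}

theorem symm (h : IsOpposite a f) : IsOpposite f a :=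
  ⟨h.right_mul_self, h.left_mul_self, h.right_mul_left_mul_right, h.left_mul_right_mul_left⟩

theorem weightScaling_mul_left (h : IsOpposite a f) (s : Rˣ) :
    weightScaling a f s * a = (s : R) • a := by
  simp only [weightScaling, add_mul, one_mul, smul_mul_assoc, h.left_mul_right_mul_left,
    mul_assoc f, h.left_mul_self, mul_zero, smul_zero]
  module

theorem left_mul_weightScaling_inv (h : IsOpposite a f) (s : Rˣ) :
    a * weightScaling a f s⁻¹ = (s : R) • a := by
  simp only [weightScaling_inv, mul_add, mul_one, mul_smul_comm, ← mul_assoc,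
    h.left_mul_right_mul_left, h.left_mul_self, zero_mul, smul_zero]
  module

theorem weightScaling_mul_right (h : IsOpposite a f) (s : Rˣ) :
    weightScaling a f s * f = (↑s⁻¹ : R) • f := by
  rw [← weightScaling_swap_inv, h.symm.weightScaling_mul_left]

theorem weightScaling_mul_weightScaling_inv (h : IsOpposite a f) (s : Rˣ) :
    weightScaling a f s * weightScaling a f s⁻¹ = 1 := by
  calc weightScaling a f s * weightScaling a f s⁻¹
      = weightScaling a f s + ((↑s⁻¹ : R) - 1) • (weightScaling a f s * a * f)
          + ((s : R) - 1) • (weightScaling a f s * f * a) := by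
        simp only [weightScaling_inv, mul_add, mul_one, mul_smul_comm, mul_assoc]
    _ = weightScaling a f s + (((↑s⁻¹ : R) - 1) * s) • (a * f)
          + (((s : R) - 1) * ↑s⁻¹) • (f * a) := by
        simp only [h.weightScaling_mul_left, h.weightScaling_mul_right, smul_mul_assoc, smul_smul]
    _ = 1 := by
        rw [weightScaling, sub_mul, sub_mul, s.inv_mul, s.mul_inv]
        module

theorem weightScaling_eq_mul (h : IsOpposite a f) (s : Rˣ) :
    weightScaling a f s =
      (1 + ((s : R) - 1) • (a * f)) * (1 + ((↑s⁻¹ : R) - 1) • (f * a)) := by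
  have h_orthogonal : a * f * (f * a) = 0 := by
    rw [mul_assoc, ← mul_assoc f, h.right_mul_self, zero_mul, mul_zero]
  rw [mul_add, mul_one, add_mul _ _ (_ • _), one_mul, smul_mul_smul_comm, h_orthogonal, smul_zero,
    add_zero, weightScaling]

theorem isIdempotentElem_mul (h : IsOpposite a f) : IsIdempotentElem (a * f) := by
  rw [IsIdempotentElem, ← mul_assoc, h.left_mul_right_mul_left]

end IsOpposite

theorem one_add_smul_mul_one_add_smul_of_isIdempotentElem {p : A} (hp : IsIdempotentElem p)
    (s : Rˣ) : (1 + ((s : R) - 1) • p) * (1 + ((↑s⁻¹ : R) - 1) • p) = 1 := by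
  have h_coeff : ((s : R) - 1) * (↑s⁻¹ - 1) = 2 - s - ↑s⁻¹ := by
    linear_combination s.mul_inv
  rw [mul_add, mul_one, add_mul _ _ (_ • _), one_mul, smul_mul_smul_comm, hp.eq, h_coeff]
  module

end Opposite

section ExistsOpposite

variable {A : Type*} [Ring A] [Invertible (2 : A)]

theorem mul_invOf_two_mul (x y : A) : x * (⅟2 * y) = ⅟2 * (x * y) :=
  (Commute.ofNat_right x 2).invOf_right.left_comm y

-- The coefficients `1/2` in the outer factors `p` and `q` are the ones for which `b q p b = 0`.
theorem isOpposite_of_reflexive_inverse {a b : A} (haa : a * a = 0) (hab : a * b * a = a)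
    (hba : b * a * b = b) :
    IsOpposite a ((1 - ⅟2 * (a * b)) * b * (1 - ⅟2 * (b * a))) := by
  generalize hp : 1 - ⅟2 * (a * b) = p
  generalize hq : 1 - ⅟2 * (b * a) = q
  have hap : a * p = a := by
    rw [← hp, mul_sub, mul_one, mul_invOf_two_mul, ← mul_assoc a, haa, zero_mul, mul_zero, sub_zero]
  have hqa : q * a = a := by
    rw [← hq, sub_mul, one_mul, mul_assoc, mul_assoc, haa, mul_zero, mul_zero, sub_zero]
  have hqp : q * p = 1 - ⅟2 * (a * b + b * a) := by
    have h_cross : b * a * (a * b) = 0 := by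
      rw [mul_assoc, ← mul_assoc a, haa, zero_mul, mul_zero]
    rw [← hp, mul_sub, mul_one, mul_invOf_two_mul, ← hq, sub_mul, one_mul, mul_assoc, h_cross,
      mul_zero, sub_zero, mul_add, sub_sub, add_comm (⅟2 * (a * b))]
  have hbqpb : b * (q * p) * b = 0 := by
    have hb_sum : b * (a * b + b * a) * b = 2 * (b * b) := by
      calc b * (a * b + b * a) * b = b * a * b * b + b * (b * a * b) := by noncomm_ring
        _ = 2 * (b * b) := by rw [hba, two_mul]
    rw [hqp, mul_sub, mul_one, sub_mul, mul_invOf_two_mul, mul_assoc ⅟2, hb_sum,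
      invOf_mul_cancel_left, sub_self]
  refine ⟨haa, ?_, ?_, ?_⟩
  · calc p * b * q * (p * b * q) = p * (b * (q * p) * b) * q := by noncomm_ring
      _ = 0 := by rw [hbqpb, mul_zero, zero_mul]
  · calc a * (p * b * q) * a = a * p * b * (q * a) := by noncomm_ring
      _ = a := by rw [hap, hqa, hab]
  · calc p * b * q * a * (p * b * q) = p * (b * (q * a) * p * b) * q := by noncomm_ring
      _ = p * (b * (a * p) * b) * q := by rw [hqa, mul_assoc b a p]
      _ = p * b * q := by rw [hap, hba]

variable [StarRing A] {J a : A}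

theorem IsFormAdjoint.invOf_two_mul {x y : A} (h : IsFormAdjoint J x y) :
    IsFormAdjoint J (⅟2 * x) (⅟2 * y) := by
  have h_half : IsFormAdjoint J (⅟2 : A) ⅟2 := by
    let _ : Invertible (star (2 : A)) := Invertible.star 2
    rw [IsFormAdjoint, star_invOf]
    simpa only [star_ofNat] using (Commute.ofNat_left 2 J).invOf_left.eq
  have h_mul := h_half.mul h
  rwa [(Commute.ofNat_right y 2).invOf_right.eq] at h_mul

theorem exists_skew_inner_inverse (hJ : IsSelfAdjoint J) (hJu : IsUnit J)
    (ha : IsFormAdjoint J a (-a)) {x : A} (hx : a * x * a = a) :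
    ∃ b, IsFormAdjoint J b (-b) ∧ a * b * a = a := by
  obtain ⟨y, hxy⟩ := IsFormAdjoint.exists_of_isUnit hJu x
  have hy : a * y * a = -a :=
    IsFormAdjoint.unique hJu (x := a) (by simpa [hx, mul_assoc] using (ha.mul hxy).mul ha) ha
  refine ⟨⅟2 * (x - y), ?_, ?_⟩
  · rw [← mul_neg, neg_sub]
    exact (hxy.sub (hxy.symm hJ)).invOf_two_mul
  · rw [mul_invOf_two_mul, mul_assoc, mul_sub, sub_mul, hx, hy, sub_neg_eq_add, ← two_mul,
      invOf_mul_cancel_left]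

theorem exists_skew_reflexive_inverse (hJ : IsSelfAdjoint J) (hJu : IsUnit J)
    (ha : IsFormAdjoint J a (-a)) {x : A} (hx : a * x * a = a) :
    ∃ b, IsFormAdjoint J b (-b) ∧ a * b * a = a ∧ b * a * b = b := by
  obtain ⟨c, hc, hac⟩ := exists_skew_inner_inverse hJ hJu ha hx
  refine ⟨c * a * c, by simpa [mul_assoc] using (hc.mul ha).mul hc, ?_, ?_⟩
  · calc a * (c * a * c) * a = a * c * a * c * a := by noncomm_ring
      _ = a := by rw [hac, hac]
  · calc c * a * c * a * (c * a * c) = c * (a * c * a * c * a) * c := by noncomm_ring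
      _ = c * a * c := by rw [hac, hac]

theorem exists_skew_isOpposite (hJ : IsSelfAdjoint J) (hJu : IsUnit J)
    (ha : IsFormAdjoint J a (-a)) (haa : a * a = 0) {x : A} (hx : a * x * a = a) :
    ∃ f, IsFormAdjoint J f (-f) ∧ IsOpposite a f := by
  obtain ⟨b, hb, hab, hba⟩ := exists_skew_reflexive_inverse hJ hJu ha hx
  refine ⟨_, ?_, isOpposite_of_reflexive_inverse haa hab hba⟩
  have h_adjoint : IsFormAdjoint J (1 - ⅟2 * (a * b)) (1 - ⅟2 * (b * a)) := by
    rw [← neg_mul_neg b a]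
    exact (IsFormAdjoint.one J).sub (ha.mul hb).invOf_two_mul
  simpa only [neg_mul, mul_neg, mul_assoc] using
    (h_adjoint.mul hb).mul (h_adjoint.symm hJ)

end ExistsOpposite

section Matrix

theorem exists_matrix_mul_mul_eq_self {m n K : Type*} [Fintype m] [Fintype n] [Field K]
    (a : Matrix m n K) : ∃ x : Matrix n m K, a * x * a = a := by
  classical
  obtain ⟨g, hg⟩ := a.toLin'.rangeRestrict.exists_rightInverse_of_surjective
    a.toLin'.range_rangeRestrict
  obtain ⟨x, hx⟩ := LinearMap.exists_extend g
  refine ⟨LinearMap.toMatrix' x, Matrix.toLin'.injective (LinearMap.ext fun v => ?_)⟩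
  have h := congrArg Subtype.val (LinearMap.congr_fun hg (a.toLin'.rangeRestrict v))
  rw [Matrix.toLin'_mul, Matrix.toLin'_mul, Matrix.toLin'_toMatrix']
  exact (congrArg a.toLin' (LinearMap.congr_fun hx _)).trans h

variable {n : Type*} [Fintype n] [DecidableEq n]

theorem IsOpposite.det_weightScaling {R K : Type*} [CommRing R] [CommRing K] [Algebra R K]
    {a f : Matrix n n K} (h : IsOpposite a f) (s : Rˣ) : (weightScaling a f s).det = 1 := by
  have h_swap (c : R) : (1 + c • (f * a)).det = (1 + c • (a * f)).det := by
    rw [← mul_smul_comm, Matrix.det_one_add_mul_comm, smul_mul_assoc]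
  rw [h.weightScaling_eq_mul, Matrix.det_mul, h_swap, ← Matrix.det_mul,
    one_add_smul_mul_one_add_smul_of_isIdempotentElem h.isIdempotentElem_mul, Matrix.det_one]

theorem exists_isometry_conj_eq_smul {R K : Type*} [CommRing R] [StarRing R] [TrivialStar R]
    [Field K] [NeZero (2 : K)] [StarRing K] [Algebra R K] [StarModule R K]
    {J a : Matrix n n K} (hJ : J.IsHermitian) (hJu : IsUnit J) (ha : IsFormAdjoint J a (-a))
    (haa : a * a = 0) (s : Rˣ) :
    ∃ g : Matrix n n K, gᴴ * J * g = J ∧ g.det = 1 ∧ g * a * g⁻¹ = ((s : R) * s) • a := by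
  have h_two : IsUnit (2 : Matrix n n K) := by
    simpa only [map_ofNat] using
      (IsUnit.mk0 (2 : K) two_ne_zero).map (algebraMap K (Matrix n n K))
  have := h_two.invertible
  obtain ⟨x, hx⟩ := exists_matrix_mul_mul_eq_self a
  obtain ⟨f, hf, h⟩ := exists_skew_isOpposite hJ hJu ha haa hx
  have h_inv : (weightScaling a f s)⁻¹ = weightScaling a f s⁻¹ :=
    Matrix.inv_eq_right_inv (h.weightScaling_mul_weightScaling_inv s)
  refine ⟨weightScaling a f s, ?_, h.det_weightScaling s, ?_⟩
  · have h_adjoint : (weightScaling a f s)ᴴ * J = J * weightScaling a f s⁻¹ := ha.weightScaling hf s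
    have h_mul := h.weightScaling_mul_weightScaling_inv s⁻¹
    rw [inv_inv] at h_mul
    rw [h_adjoint, mul_assoc, h_mul, mul_one]
  · rw [h_inv, h.weightScaling_mul_left, smul_mul_assoc, h.left_mul_weightScaling_inv, smul_smul]

end Matrix

theorem zero_mem_closure_of_forall_pos_smul_mem {E : Type*} [AddCommMonoid E] [Module ℝ E]
    [TopologicalSpace E] [ContinuousSMul ℝ E] {S : Set E} (x : E)
    (hS : ∀ t : ℝ, 0 < t → t • x ∈ S) : 0 ∈ closure S := by
  have h_tendsto : Filter.Tendsto (fun t : ℝ => t • x) (nhdsWithin 0 (Set.Ioi 0)) (nhds 0) := by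
    have h_cont : Continuous fun t : ℝ => t • x := by fun_prop
    simpa only [zero_smul] using (h_cont.tendsto 0).mono_left nhdsWithin_le_nhds
  exact mem_closure_of_tendsto h_tendsto (Filter.eventually_of_mem self_mem_nhdsWithin hS)

theorem stmt16_general {𝕜 n : Type*} [RCLike 𝕜] [Fintype n] [DecidableEq n]
    (J a : Matrix n n 𝕜) (hJ : J.IsHermitian) (hJu : IsUnit J) (hskew : aᴴ * J + J * a = 0)
    (hsq : a * a = 0) :
    (∀ t : ℝ, 0 < t →
      ∃ g : Matrix n n 𝕜, gᴴ * J * g = J ∧ g.det = 1 ∧ g * a * g⁻¹ = t • a) ∧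
    (0 : Matrix n n 𝕜) ∈
      closure {b | ∃ g : Matrix n n 𝕜, gᴴ * J * g = J ∧ g.det = 1 ∧ b = g * a * g⁻¹} := by
  have ha : IsFormAdjoint J a (-a) := by
    rw [IsFormAdjoint, mul_neg]
    exact eq_neg_of_add_eq_zero_left hskew
  have h_conj (t : ℝ) (ht : 0 < t) :
      ∃ g : Matrix n n 𝕜, gᴴ * J * g = J ∧ g.det = 1 ∧ g * a * g⁻¹ = t • a := by
    have h := exists_isometry_conj_eq_smul hJ hJu ha hsq (Units.mk0 √t (Real.sqrt_pos.mpr ht).ne')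
    rwa [Units.val_mk0, Real.mul_self_sqrt ht.le] at h
  refine ⟨h_conj, zero_mem_closure_of_forall_pos_smul_mem a fun t ht => ?_⟩
  obtain ⟨g, hg, h_det, hga⟩ := h_conj t ht
  exact ⟨g, hg, h_det, hga.symm⟩

theorem isHermitian_etaMat (l n : ℕ) : (etaMat l n).IsHermitian :=
  Matrix.isHermitian_diagonal_iff.mpr fun i => by
    split_ifs
    exacts [.one ℂ, (IsSelfAdjoint.one ℂ).neg]

theorem isUnit_etaMat (l n : ℕ) : IsUnit (etaMat l n) :=
  Matrix.isUnit_diagonal.mpr <| Pi.isUnit_iff.mpr fun i => by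
    split_ifs
    exacts [isUnit_one, isUnit_one.neg]

/-- Every `a ∈ su(l,j)` with `a² = 0` is `SU(l,j)`-conjugate to `t·a` for every real
`t > 0`; consequently `0` lies in the closure of the `SU(l,j)`-adjoint orbit of `a`. -/
theorem stmt16 (l j : ℕ) (a : Matrix (Fin (l + j)) (Fin (l + j)) ℂ)
    (htr : Matrix.trace a = 0)
    (hskew : aᴴ * etaMat l (l + j) + etaMat l (l + j) * a = 0)
    (hsq : a * a = 0) :
    (∀ t : ℝ, 0 < t →
      ∃ g : Matrix (Fin (l + j)) (Fin (l + j)) ℂ,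
        gᴴ * etaMat l (l + j) * g = etaMat l (l + j) ∧ g.det = 1 ∧
          g * a * g⁻¹ = (t : ℂ) • a) ∧
    (0 : Matrix (Fin (l + j)) (Fin (l + j)) ℂ) ∈
      closure {b | ∃ g : Matrix (Fin (l + j)) (Fin (l + j)) ℂ,
        gᴴ * etaMat l (l + j) * g = etaMat l (l + j) ∧ g.det = 1 ∧ b = g * a * g⁻¹} := by
  simpa only [Complex.coe_smul] using
    stmt16_general (etaMat l (l + j)) a (isHermitian_etaMat _ _) (isUnit_etaMat _ _) hskew hsq
end

section
/- Let Z and L be algebraic sets in a finite-dimensional real vector space S (zero sets of polynomial maps). If L contains every real-analytic curve [0,δ) → S starting at 0 and lying entirely in Z, then L contains all points of Z sufficiently close to 0. -/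
/-!
If points of `Z \ L` accumulate at `0`, an ultrafilter through them turns them into one point `x`
over an ultrapower of `ℝ`. Put `ρ = ∑ xᵢ²`. The ultrapower inherits from `ℝ` that roots of
polynomial families can be followed in a parameter, and this is enough for the Artin–Lang argument:
over the relative algebraic closure of `ℝ(ρ)` in the ultrapower there is another point, on the same
sphere `∑ xᵢ² = ρ`, in `Z` and still outside `L`. Its coordinates are algebraic over `ℝ(ρ)` and tend
to `0`. By the Newton–Puiseux induction on the multiplicity of a root, carried out along the
ultrafilter instead of on formal power series, they are therefore analytic functions of
`ρ ^ (1 / d)`, and these functions are the coordinates of an analytic curve in `Z` that leaves `L`.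
-/

open Polynomial Filter Topology

section Roots

variable {α : Type*}

lemma tendsto_cauchyBound {K : Type*} [NormedDivisionRing K] {l : Filter α} {p : α → K[X]}
    {q : K[X]} (hq : q ≠ 0) (hdeg : ∀ᶠ a in l, (p a).natDegree ≤ q.natDegree)
    (hcoeff : ∀ i, Tendsto (fun a => (p a).coeff i) l (𝓝 (q.coeff i))) :
    Tendsto (fun a => cauchyBound (p a)) l (𝓝 (cauchyBound q)) := by
  have hdeg_eq : ∀ᶠ a in l, (p a).natDegree = q.natDegree := by
    filter_upwards [hdeg, (hcoeff q.natDegree).eventually_ne (leadingCoeff_ne_zero.2 hq)]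
      with a hle hne using hle.antisymm (le_natDegree_of_ne_zero hne)
  have hlim : Tendsto (fun a => (Finset.range q.natDegree).sup (fun i => ‖(p a).coeff i‖₊) /
      ‖(p a).coeff q.natDegree‖₊ + 1) l (𝓝 (cauchyBound q)) :=
    ((Tendsto.finset_sup_nhds_apply fun i _ => (hcoeff i).nnnorm).div
      (hcoeff q.natDegree).nnnorm (by simpa using hq)).add_const 1
  refine hlim.congr' ?_
  filter_upwards [hdeg_eq] with a ha
  rw [cauchyBound, leadingCoeff, ha]

lemma continuous_evalEval (P : ℝ[X][X]) :
    Continuous (Function.uncurry fun t y => P.evalEval t y) := by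
  simp only [Function.uncurry_def, ← map_evalRingHom_eval, eval_map, eval₂_eq_sum_range,
    coe_evalRingHom]
  fun_prop

lemma isClosed_setOf_exists_evalEval_eq_zero {P : ℝ[X][X]} (hP : P.Monic) :
    IsClosed {t | ∃ y, P.evalEval t y = 0} := by
  let p : ℝ → ℝ[X] := fun t => P.map (evalRingHom t)
  have hp (t) : (p t).Monic := hP.map _
  let b : ℝ → ℝ := fun t => cauchyBound (p t)
  have hb : Continuous b := continuous_iff_continuousAt.2 fun t =>
    (NNReal.continuous_coe.tendsto _).comp <| tendsto_cauchyBound (hp t).ne_zero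
      (.of_forall fun s => by rw [hP.natDegree_map, hP.natDegree_map]) fun i => by
        simpa [p] using (P.coeff i).continuous.tendsto t
  have hb_pos (t) : 0 < b t := zero_lt_one.trans_le (one_le_cauchyBound (p t))
  have hclosed : IsClosed {q : ℝ × Set.Icc (-1 : ℝ) 1 | P.evalEval q.1 (b q.1 * q.2) = 0} :=
    isClosed_eq ((continuous_evalEval P).comp (f := fun q : ℝ × Set.Icc (-1 : ℝ) 1 =>
      (q.1, b q.1 * q.2)) (by fun_prop)) continuous_const
  convert isClosedMap_fst_of_compactSpace _ hclosed using 1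
  ext t
  refine ⟨fun ⟨y, hy⟩ => ?_, fun ⟨⟨_, z⟩, hz, rfl⟩ => ⟨_, hz⟩⟩
  have hlt : |y| < b t := IsRoot.norm_lt_cauchyBound (hp t).ne_zero
    (by rwa [IsRoot.def, map_evalRingHom_eval])
  have hz : y / b t ∈ Set.Icc (-1 : ℝ) 1 := by
    rw [Set.mem_Icc, ← abs_le, abs_div, abs_of_pos (hb_pos t)]
    exact (div_le_one (hb_pos t)).2 hlt.le
  exact ⟨(t, ⟨y / b t, hz⟩), by simpa [mul_div_cancel₀ y (hb_pos t).ne'] using hy, rfl⟩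

lemma exists_neg_and_exists_pos_of_simple_root {p : ℝ[X]} {y : ℝ} (hy : p.eval y = 0)
    (hy' : p.derivative.eval y ≠ 0) : (∃ z, p.eval z < 0) ∧ ∃ z, 0 < p.eval z := by
  constructor <;> by_contra! h
  · exact hy' <| IsLocalMin.hasDerivAt_eq_zero (.of_forall fun z => hy ▸ h z) (p.hasDerivAt y)
  · exact hy' <| IsLocalMax.hasDerivAt_eq_zero (.of_forall fun z => hy ▸ h z) (p.hasDerivAt y)

lemma eventually_exists_evalEval_eq_zero {P : ℝ[X][X]} {t y : ℝ} (hy : P.evalEval t y = 0)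
    (hy' : P.derivative.evalEval t y ≠ 0) : ∀ᶠ s in 𝓝 t, ∃ z, P.evalEval s z = 0 := by
  simp only [← map_evalRingHom_eval, ← derivative_map] at hy hy'
  obtain ⟨⟨z₁, hz₁⟩, z₂, hz₂⟩ := exists_neg_and_exists_pos_of_simple_root hy hy'
  rw [map_evalRingHom_eval] at hz₁ hz₂
  have hcont := continuous_evalEval P
  filter_upwards [(hcont.uncurry_right z₁).continuousAt.eventually_lt_const hz₁,
    (hcont.uncurry_right z₂).continuousAt.eventually_const_lt hz₂] with s h₁ h₂
  exact mem_range_of_exists_le_of_exists_ge (hcont.uncurry_left s) ⟨z₁, h₁.le⟩ ⟨z₂, h₂.le⟩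

/-- An ordered field has root continuation if a root of a monic polynomial depending polynomially
on a parameter can be followed from the parameter value `s` to `a`, unless some member of the
family in between has a multiple root. It takes the place of real closedness in the
Artin–Lang theorem `RootContinuation.nonempty_algHom`, and passes to ultrapowers. -/
def RootContinuation (K : Type*) [Field K] [LinearOrder K] : Prop :=
  ∀ ⦃P : K[X][X]⦄, P.Monic → ∀ ⦃s a y : K⦄, P.evalEval s y = 0 →
    (∃ z, P.evalEval a z = 0) ∨
      ∃ b ∈ Set.uIcc s a, ∃ z, P.evalEval b z = 0 ∧ P.derivative.evalEval b z = 0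

lemma rootContinuation_real : RootContinuation ℝ := by
  intro P hP s a y hy
  by_contra! ⟨ha, hsimple⟩
  let S : Set ℝ := {t | ∃ z, P.evalEval t z = 0}
  have hopen : ∀ b ∈ Set.uIcc s a, b ∈ S → b ∈ interior S := fun b hb ⟨z, hz⟩ =>
    mem_interior_iff_mem_nhds.2 (eventually_exists_evalEval_eq_zero hz (hsimple b hb z hz))
  have hsub : Set.uIcc s a ⊆ interior S := isPreconnected_uIcc.subset_of_closure_inter_subset
    isOpen_interior ⟨s, Set.left_mem_uIcc, hopen s Set.left_mem_uIcc ⟨y, hy⟩⟩ fun b hb =>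
      hopen b hb.2 <|
        closure_minimal interior_subset (isClosed_setOf_exists_evalEval_eq_zero hP) hb.1
  obtain ⟨z, hz⟩ := interior_subset (hsub Set.right_mem_uIcc)
  exact ha z hz

section Germ

variable {K : Type*} (u : Ultrafilter α)

lemma germ_mem_uIcc [LinearOrder K] {b s a : α → K} :
    (b : Germ (u : Filter α) K) ∈ Set.uIcc (s : Germ (u : Filter α) K) a ↔
      ∀ᶠ n in u, b n ∈ Set.uIcc (s n) (a n) := by
  simp only [Set.mem_uIcc, Germ.coe_le, Ultrafilter.eventually_or, eventually_and]
  rfl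

variable [Field K]

lemma evalEval_map_coeRingHom_eq_zero (Q : (α → K)[X][X]) {b y : α → K} :
    (Q.map (mapRingHom (Germ.coeRingHom (u : Filter α)))).evalEval
        (b : Germ (u : Filter α) K) y = 0 ↔
      ∀ᶠ n in u, (Q.map (mapRingHom (Pi.evalRingHom _ n))).evalEval (b n) (y n) = 0 := by
  have hn (n) : (Q.map (mapRingHom (Pi.evalRingHom _ n))).evalEval (b n) (y n) =
      Q.evalEval b y n := map_mapRingHom_evalEval (Pi.evalRingHom _ n) Q b y
  simp only [hn]
  exact (map_mapRingHom_evalEval (Germ.coeRingHom (u : Filter α)) Q b y).congr_left.trans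
    Germ.coe_eq

lemma RootContinuation.germ [LinearOrder K] (hK : RootContinuation K) :
    RootContinuation (Germ (u : Filter α) K) := by
  intro P hP s a y hy
  have hsurj : Function.Surjective (Germ.coeRingHom (R := K) (u : Filter α)) :=
    Quotient.mk_surjective
  obtain ⟨Q, rfl, -, hQ⟩ := lifts_and_degree_eq_and_monic
    (mem_lifts_of_surjective (f := mapRingHom _) (map_surjective _ hsurj) P) hP
  induction s using Germ.inductionOn with | _ s => ?_
  induction a using Germ.inductionOn with | _ a => ?_
  induction y using Germ.inductionOn with | _ y => ?_
  have hQ_monic (n) : (Q.map (mapRingHom (Pi.evalRingHom _ n))).Monic := hQ.map _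
  have hy_eventually := (evalEval_map_coeRingHom_eq_zero u Q).1 hy
  have hcont := hy_eventually.mono fun n hn => hK (hQ_monic n) (a := a n) hn
  rw [Ultrafilter.eventually_or] at hcont
  rw [derivative_map]
  refine hcont.imp (fun h => ?_) fun h => ?_
  · obtain ⟨z, hz⟩ := skolem.1 h
    exact ⟨z, (evalEval_map_coeRingHom_eq_zero u Q).2 hz⟩
  · obtain ⟨b, hb⟩ := skolem.1 h
    obtain ⟨hbmem, h⟩ := eventually_and.1 hb
    obtain ⟨z, hz⟩ := skolem.1 h
    simp only [derivative_map, eventually_and] at hz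
    exact ⟨b, (germ_mem_uIcc u).2 hbmem, z, (evalEval_map_coeRingHom_eq_zero u Q).2 hz.1,
      (evalEval_map_coeRingHom_eq_zero u _).2 hz.2⟩

end Germ

end Roots

section ArtinLang

section

variable {E M : Type*} [Field E] [Field M] [LinearOrder M] [IsStrictOrderedRing M] [Algebra E M]
  [IsIntegrallyClosedIn E M]

lemma exists_forall_mem_uIcc_aeval_ne_zero {s : M} (hs : Transcendental E s) {h : E[X]}
    (h0 : h ≠ 0) : ∃ a : E, ∀ b ∈ Set.uIcc s (algebraMap E M a), aeval b h ≠ 0 := by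
  classical
  let ι := algebraMap E M
  let _ : LinearOrder E := .lift' ι ι.injective
  have : IsStrictOrderedRing E := Function.Injective.isStrictOrderedRing ι (map_zero ι) (map_one ι)
    (map_add ι) (map_mul ι) .rfl .rfl
  obtain ⟨a, hlo, hhi⟩ := Order.exists_between_finsets
    (h.roots.toFinset.filter (ι · < s)) (h.roots.toFinset.filter (s < ι ·)) fun x hx y hy =>
      show ι x < ι y from (Finset.mem_filter.1 hx).2.trans (Finset.mem_filter.1 hy).2
  refine ⟨a, fun b hb hbh => ?_⟩
  have hb_alg : IsAlgebraic E b := ⟨h, h0, hbh⟩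
  obtain ⟨r, rfl⟩ := IsIntegrallyClosedIn.isIntegral_iff.1 hb_alg.isIntegral
  have hr : r ∈ h.roots.toFinset := by
    simpa [h0, aeval_algebraMap_apply] using hbh
  rcases lt_trichotomy (ι r) s with hlt | rfl | hlt
  · exact (lt_inf_iff.2 ⟨hlt, hlo r (Finset.mem_filter.2 ⟨hr, hlt⟩)⟩).not_ge hb.1
  · exact hs hb_alg
  · exact (sup_lt_iff.2 ⟨hlt, hhi r (Finset.mem_filter.2 ⟨hr, hlt⟩)⟩).not_ge hb.2

end

lemma exists_adjoin_simple_eq_adjoin_finset {K Ω : Type*} [Field K] [CharZero K] [Field Ω]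
    [Algebra K Ω] (S : Finset Ω) (hS : ∀ x ∈ S, IsIntegral K x) :
    ∃ y : Ω, IsIntegral K y ∧
      IntermediateField.adjoin K {y} = IntermediateField.adjoin K (S : Set Ω) := by
  have := IntermediateField.finiteDimensional_adjoin (K := K) hS
  obtain ⟨y, hy⟩ := Field.exists_primitive_element K (IntermediateField.adjoin K (S : Set Ω))
  refine ⟨y, (IsIntegral.of_finite K y).map (IntermediateField.val _), ?_⟩
  rw [← IntermediateField.lift_adjoin_simple, hy, IntermediateField.lift_top]

section

variable {R Ω : Type*} [CommRing R] [IsDomain R] [Field Ω] [Algebra R Ω]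

lemma exists_forall_smul_mem_adjoin (K : Type*) [Field K] [Algebra R K] [IsFractionRing R K]
    [Algebra K Ω] [IsScalarTower R K Ω] (T : Set Ω) (S : Finset Ω)
    (hS : ∀ x ∈ S, x ∈ Algebra.adjoin K T) :
    ∃ d : R, d ≠ 0 ∧ ∀ x ∈ S, d • x ∈ Algebra.adjoin R T := by
  classical
  choose! d hd using fun x hx => multiple_mem_adjoin_of_mem_localization_adjoin
    (nonZeroDivisors R) K T x (hS x hx)
  refine ⟨∏ x ∈ S, d x, Finset.prod_ne_zero_iff.2 fun x _ => nonZeroDivisors.coe_ne_zero _,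
    fun x hx => ?_⟩
  rw [← Finset.prod_erase_mul _ _ hx, mul_smul]
  exact Subalgebra.smul_mem _ (hd x hx) _

lemma exists_isIntegral_forall_smul_mem_adjoin [Module.IsTorsionFree R Ω] [CharZero Ω]
    (S : Finset Ω) (hS : ∀ x ∈ S, IsAlgebraic R x) :
    ∃ y : Ω, IsIntegral R y ∧ ∃ d : R, d ≠ 0 ∧ ∀ x ∈ S, d • x ∈ Algebra.adjoin R {y} := by
  let K := FractionRing R
  let _ := FractionRing.liftAlgebra R Ω
  have := FractionRing.isScalarTower_liftAlgebra R Ω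
  have : CharZero K := (algebraMap K Ω).charZero
  have halg {x : Ω} : IsAlgebraic R x ↔ IsAlgebraic K x := IsFractionRing.isAlgebraic_iff R K Ω
  obtain ⟨y, hy_int, hy⟩ := exists_adjoin_simple_eq_adjoin_finset (K := K) S
    fun x hx => (halg.1 (hS x hx)).isIntegral
  obtain ⟨r, hr, hry⟩ := (halg.2 hy_int.isAlgebraic).exists_integral_multiple
  refine ⟨r • y, hry, exists_forall_smul_mem_adjoin K _ S fun x hx => ?_⟩
  have hxy : x ∈ IntermediateField.adjoin K {y} := hy ▸ IntermediateField.subset_adjoin K _ hx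
  rw [← IntermediateField.mem_toSubalgebra,
    IntermediateField.adjoin_simple_toSubalgebra_of_isAlgebraic hy_int.isAlgebraic] at hxy
  have hsmul : (algebraMap R K r)⁻¹ • r • y = y := by
    rw [← algebraMap_smul K r y, inv_smul_smul₀ (by simpa using hr)]
  have hyr : y ∈ Algebra.adjoin K {r • y} := by
    have := Subalgebra.smul_mem _ (Algebra.self_mem_adjoin_singleton K (r • y)) (algebraMap R K r)⁻¹
    rwa [hsmul] at this
  exact Algebra.adjoin_le (Set.singleton_subset_iff.2 hyr) hxy

end

section

variable {E T M A : Type*} [Field E] [CommRing T] [Field M] [CommRing A] [Algebra E T]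
  [Algebra E M] [Algebra E A]

lemma nonempty_algHom_of_map_mul_mem_range {ι : T →ₐ[E] M} (hι : Function.Injective ι)
    (ψ : T →ₐ[E] E) {d : T} (hd : ψ d ≠ 0) {S : Set A} (hS : Algebra.adjoin E S = ⊤)
    (f : A →ₐ[E] M) (hf : ∀ a ∈ S, ι d * f a ∈ ι.range) : Nonempty (A →ₐ[E] E) := by
  have hιd : ι d ≠ 0 := by
    rw [Ne, map_eq_zero_iff ι hι]
    rintro rfl
    exact hd (map_zero ψ)
  let L := Localization.Away d
  let j : L →ₐ[E] M := IsLocalization.liftAlgHom (M := .powers d) (f := ι) <| by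
    rintro ⟨_, n, rfl⟩
    simpa using (hιd.isUnit.pow n)
  let k : L →ₐ[E] E := IsLocalization.liftAlgHom (M := .powers d) (f := ψ) <| by
    rintro ⟨_, n, rfl⟩
    simpa using (hd.isUnit.pow n)
  have hj_algebraMap (t : T) : j (algebraMap T L t) = ι t := IsLocalization.lift_eq _ t
  have hj : Function.Injective j := (IsLocalization.lift_injective_iff _).2 fun x y =>
    ⟨fun h => (hj_algebraMap x).symm.trans ((congrArg j h).trans (hj_algebraMap y)),
      fun h => congrArg _ (hι h)⟩
  have hrange : ⊤ ≤ j.range.comap f := hS ▸ Algebra.adjoin_le fun a ha => by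
    obtain ⟨t, ht⟩ := hf a ha
    refine ⟨algebraMap T L t * IsLocalization.Away.invSelf d, mul_left_cancel₀ hιd ?_⟩
    calc ι d * j (algebraMap T L t * IsLocalization.Away.invSelf d)
        = j (algebraMap T L t * (algebraMap T L d * IsLocalization.Away.invSelf d)) := by
          rw [← hj_algebraMap d, ← map_mul, mul_left_comm]
      _ = ι d * f a := by rw [IsLocalization.Away.mul_invSelf, mul_one, hj_algebraMap]; exact ht
  exact ⟨k.comp ((AlgEquiv.ofInjective j hj).symm.toAlgHom.comp
    (f.codRestrict _ fun a => hrange Algebra.mem_top))⟩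

end

section

variable {R Ω : Type*} [CommRing R] [IsDomain R] [IsIntegrallyClosed R] [Field Ω] [CharZero Ω]
  [Algebra R Ω] [Module.IsTorsionFree R Ω]

lemma aeval_derivative_minpoly_ne_zero {y : Ω} (hy : IsIntegral R y) :
    aeval y (derivative (minpoly R y)) ≠ 0 := by
  have : CharZero R := (algebraMap R Ω).charZero
  intro h
  have hne : derivative (minpoly R y) ≠ 0 := fun h0 =>
    (minpoly.natDegree_pos hy).ne' (derivative_eq_zero.1 h0)
  exact (minpoly.IsIntegrallyClosed.degree_le_of_ne_zero hne h).not_gt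
    (degree_derivative_lt (minpoly.ne_zero hy))

lemma exists_C_eq_mul_minpoly_add_mul_derivative {y : Ω} (hy : IsIntegral R y) :
    ∃ h : R, h ≠ 0 ∧ ∃ U V : R[X],
      C h = U * minpoly R y + V * derivative (minpoly R y) := by
  have : Algebra.IsIntegral R (Algebra.adjoin R {y}) :=
    Algebra.IsIntegral.adjoin (by simpa using hy)
  let z : Algebra.adjoin R {y} :=
    ⟨aeval y (derivative (minpoly R y)), aeval_mem_adjoin_singleton R y⟩
  have hz : z ≠ 0 := fun h => aeval_derivative_minpoly_ne_zero hy (congrArg Subtype.val h)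
  have hz_alg : IsAlgebraic R z := (Algebra.IsIntegral.isIntegral z).isAlgebraic
  obtain ⟨h, hh, ⟨v, hv⟩, hzv⟩ := hz_alg.exists_nonzero_dvd
    (mem_nonZeroDivisors_of_ne_zero hz)
  obtain ⟨V, rfl⟩ := Algebra.adjoin_singleton_eq_range_aeval R y ▸ hv
  have hroot : aeval y (C h - V * derivative (minpoly R y)) = 0 := by
    have hval : algebraMap R Ω h = aeval y (derivative (minpoly R y)) * aeval y V :=
      congrArg Subtype.val hzv
    rw [map_sub, aeval_C, map_mul, hval, mul_comm, sub_self]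
  obtain ⟨U, hU⟩ := minpoly.isIntegrallyClosed_dvd hy hroot
  exact ⟨h, hh, U, V, by rw [mul_comm U, ← hU, sub_add_cancel]⟩

end

section

variable {E M : Type*} [Field E] [Field M] [Algebra E M]

lemma evalEval_map_mapRingHom_algebraMap (G : E[X][X]) (b z : M) :
    (G.map (mapRingHom (algebraMap E M))).evalEval b z = aevalAeval b z G := by
  rw [← eval₂_eval₂RingHom_apply]
  exact congr($(show eval₂RingHom (eval₂RingHom (algebraMap E M) b) z =
    (aevalAeval b z : E[X][X] →ₐ[E] M).toRingHom by ext <;> simp) G)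

lemma isIntegral_of_aevalAeval_eq_zero {G : E[X][X]} (hG : G.Monic) {a : E} {z : M}
    (h : aevalAeval (algebraMap E M a) z G = 0) : IsIntegral E z := by
  refine ⟨G.map (evalRingHom a), hG.map _, ?_⟩
  rw [eval₂_map, ← h]
  exact congr($(show eval₂RingHom ((algebraMap E M).comp (evalRingHom a)) z =
    (aevalAeval (algebraMap E M a) z : E[X][X] →ₐ[E] M).toRingHom by ext <;> simp) G)

variable [Algebra E[X] M] [IsScalarTower E E[X] M]

lemma aevalAeval_algebraMap_X (y : M) (G : E[X][X]) :
    aevalAeval (algebraMap E[X] M X) y G = aeval (R := E[X]) y G :=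
  congr($(show (aevalAeval (algebraMap E[X] M X) y : E[X][X] →ₐ[E] M) =
    (aeval (R := E[X]) y).restrictScalars E from
      (aevalAevalEquiv E M).symm.injective (by ext <;> simp)) G)

variable [LinearOrder M] [IsStrictOrderedRing M] [IsIntegrallyClosedIn E M]
  [Module.IsTorsionFree E[X] M]

lemma RootContinuation.exists_eval₂_minpoly_eq_zero (hM : RootContinuation M) {y : M}
    (hy : IsIntegral E[X] y) {d : E[X]} (hd : d ≠ 0) :
    ∃ a z : E, d.eval a ≠ 0 ∧ (minpoly E[X] y).eval₂ (aeval a : E[X] →ₐ[E] E) z = 0 := by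
  let ι := algebraMap E M
  let s := algebraMap E[X] M X
  have hs : Transcendental E s := transcendental_iff_injective.2 <| by
    rw [← show IsScalarTower.toAlgHom E E[X] M = aeval s from algHom_ext (by simp [s])]
    exact FaithfulSMul.algebraMap_injective E[X] M
  obtain ⟨h, h0, U, V, hUV⟩ := exists_C_eq_mul_minpoly_add_mul_derivative hy
  obtain ⟨a, ha⟩ := exists_forall_mem_uIcc_aeval_ne_zero hs (mul_ne_zero h0 hd)
  simp only [map_mul, mul_ne_zero_iff] at ha
  -- `h` vanishes wherever `minpoly E[X] y` has a multiple root; since it has no zero between `s`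
  -- and `a`, the root `y` can be followed from `s` to `a`.
  have hroot := hM ((minpoly.monic hy).map (mapRingHom ι)) (s := s) (a := ι a) (y := y)
  simp only [derivative_map, ι, evalEval_map_mapRingHom_algebraMap] at hroot
  obtain ⟨z, hz⟩ | ⟨b, hb, z, hz, hz'⟩ :=
    hroot ((aevalAeval_algebraMap_X y _).trans (minpoly.aeval _ y))
  · obtain ⟨z, rfl⟩ := IsIntegrallyClosedIn.isIntegral_iff.1
      (isIntegral_of_aevalAeval_eq_zero (minpoly.monic hy) hz)
    refine ⟨a, z, ?_, ι.injective ?_⟩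
    · simpa [aeval_algebraMap_apply] using (ha _ Set.right_mem_uIcc).2
    · rw [map_zero, ← hz]
      exact congr($(show ι.comp (eval₂RingHom (aeval a : E[X] →ₐ[E] E) z) =
        (aevalAeval (ι a) (ι z) : E[X][X] →ₐ[E] M).toRingHom by ext <;> simp [ι])
          (minpoly E[X] y))
  · have hzero := congrArg (aevalAeval b z) hUV
    rw [map_add, map_mul, map_mul, hz, hz', mul_zero, mul_zero, add_zero, aevalAeval_C] at hzero
    exact ((ha b hb).1 hzero).elim

lemma RootContinuation.exists_algHom_adjoin (hM : RootContinuation M) {y : M}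
    (hy : IsIntegral E[X] y) {d : E[X]} (hd : d ≠ 0) :
    ∃ ψ : Algebra.adjoin E[X] {y} →ₐ[E] E, ψ (algebraMap _ _ d) ≠ 0 := by
  obtain ⟨a, z, ha, hz⟩ := hM.exists_eval₂_minpoly_eq_zero hy hd
  refine ⟨(AdjoinRoot.liftAlgHom _ (aeval a) z hz).comp
    ((minpoly.equivAdjoin hy).symm.toAlgHom.restrictScalars E), ?_⟩
  have hcommutes : (minpoly.equivAdjoin hy).symm (algebraMap E[X] _ d) = AdjoinRoot.of _ d :=
    (minpoly.equivAdjoin hy).symm.commutes d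
  simpa [hcommutes] using ha

lemma RootContinuation.nonempty_algHom_of_isAlgebraic {A : Type*} [CommRing A] [Algebra E A]
    [Algebra.FiniteType E A] (hM : RootContinuation M) (f : A →ₐ[E] M)
    (hf : ∀ a, IsAlgebraic E[X] (f a)) : Nonempty (A →ₐ[E] E) := by
  classical
  obtain ⟨S, hS⟩ := Algebra.FiniteType.out (R := E) (A := A)
  obtain ⟨y, hy, d, hd, hmem⟩ := exists_isIntegral_forall_smul_mem_adjoin (R := E[X])
    (S.image f) (Finset.forall_mem_image.2 fun a _ => hf a)
  obtain ⟨ψ, hψ⟩ := hM.exists_algHom_adjoin hy hd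
  refine nonempty_algHom_of_map_mul_mem_range
    (ι := (Algebra.adjoin E[X] {y}).val.restrictScalars E) Subtype.val_injective ψ hψ hS f
    fun a ha => ⟨⟨_, hmem _ (Finset.mem_image_of_mem f ha)⟩, ?_⟩
  exact Algebra.smul_def d (f a)

end

section

universe u

variable {M : Type u} [Field M] [LinearOrder M] [IsStrictOrderedRing M]

lemma RootContinuation.nonempty_algHom_adjoin_insert (hM : RootContinuation M) {E : Type u}
    [Field E] [Algebra E M] [IsIntegrallyClosedIn E M] {s : M} (hs : Transcendental E s)
    {S : Set M} (hS : S.Finite)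
    (ih : ∀ (L : Type u) [Field L] [Algebra L M] [IsIntegrallyClosedIn L M],
      Nonempty (Algebra.adjoin L S →ₐ[L] L)) :
    Nonempty (Algebra.adjoin E (insert s S) →ₐ[E] E) := by
  let _ : Algebra E[X] M := (aeval s : E[X] →ₐ[E] M).toRingHom.toAlgebra
  have : IsScalarTower E E[X] M := .of_algebraMap_eq fun e => (aeval_C s e).symm
  have : FaithfulSMul E[X] M :=
    (faithfulSMul_iff_algebraMap_injective _ _).2 (transcendental_iff_injective.1 hs)
  let K := FractionRing E[X]
  let _ : Algebra K M := FractionRing.liftAlgebra E[X] M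
  have : IsScalarTower E[X] K M := FractionRing.isScalarTower_liftAlgebra E[X] M
  have : IsScalarTower E K M := .to₁₃₄ E E[X] K M
  let L := algebraicClosure K M
  have : IsScalarTower E L M := .of_algebraMap_eq fun _ => rfl
  have : IsIntegrallyClosedIn L M := inferInstanceAs (IsIntegrallyClosedIn (integralClosure K M) M)
  obtain ⟨g⟩ := ih L
  have hsL : s ∈ L := mem_algebraicClosure_iff.2 <| by
    have : algebraMap K M (algebraMap E[X] K X) = s :=
      (IsScalarTower.algebraMap_apply E[X] K M X).symm.trans (aeval_X s)
    exact this ▸ isAlgebraic_algebraMap _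
  have hle : Algebra.adjoin E (insert s S) ≤ (Algebra.adjoin L S).restrictScalars E :=
    Algebra.adjoin_le <| Set.insert_subset
      ((Algebra.adjoin L S).algebraMap_mem ⟨s, hsL⟩) Algebra.subset_adjoin
  have : Algebra.FiniteType E (Algebra.adjoin E (insert s S)) :=
    (Subalgebra.fg_iff_finiteType _).1 (Subalgebra.fg_def.2 ⟨_, hS.insert s, rfl⟩)
  refine hM.nonempty_algHom_of_isAlgebraic
    ((L.val.restrictScalars E).comp ((g.restrictScalars E).comp (Subalgebra.inclusion hle)))
    fun a => (IsFractionRing.isAlgebraic_iff E[X] K M).2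
      (mem_algebraicClosure_iff.1 (Subtype.prop _))

lemma RootContinuation.nonempty_algHom_adjoin (hM : RootContinuation M) {S : Set M}
    (hS : S.Finite) : ∀ (E : Type u) [Field E] [Algebra E M] [IsIntegrallyClosedIn E M],
      Nonempty (Algebra.adjoin E S →ₐ[E] E) := by
  induction S, hS using Set.Finite.induction_on with
  | empty =>
    intro E _ _ _
    rw [Algebra.adjoin_empty]
    exact ⟨(Algebra.botEquiv E M).toAlgHom⟩
  | @insert s S _ hS ih =>
    intro E _ _ _
    by_cases hs : IsAlgebraic E s
    · obtain ⟨e, rfl⟩ := IsIntegrallyClosedIn.isIntegral_iff.1 hs.isIntegral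
      rw [Algebra.adjoin_insert_algebraMap]
      exact ih E
    · exact hM.nonempty_algHom_adjoin_insert hs hS ih

theorem RootContinuation.nonempty_algHom (hM : RootContinuation M) {E : Type u} [Field E]
    [Algebra E M] [IsIntegrallyClosedIn E M] {A : Type*} [CommRing A] [Algebra E A]
    [Algebra.FiniteType E A] (f : A →ₐ[E] M) : Nonempty (A →ₐ[E] E) := by
  obtain ⟨S, hS⟩ := Algebra.FiniteType.out (R := E) (A := A)
  have hrange : f.range = Algebra.adjoin E (f '' S) := by
    rw [← f.map_adjoin, hS, Algebra.map_top]
  obtain ⟨g⟩ := hM.nonempty_algHom_adjoin (S.finite_toSet.image f) E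
  exact ⟨g.comp ((Subalgebra.equivOfEq _ _ hrange).toAlgHom.comp f.rangeRestrict)⟩

lemma RootContinuation.exists_isAlgebraic_point {k σ : Type*} [Field k] [Algebra k M] [Finite σ]
    (hM : RootContinuation M) (x : σ → M) (r g : MvPolynomial σ k)
    (hg : MvPolynomial.aeval x g ≠ 0) :
    ∃ x' : σ → M, (∀ i, IsAlgebraic (IntermediateField.adjoin k {MvPolynomial.aeval x r}) (x' i)) ∧
      MvPolynomial.aeval x' r = MvPolynomial.aeval x r ∧
      (∀ f : MvPolynomial σ k, MvPolynomial.aeval x f = 0 → MvPolynomial.aeval x' f = 0) ∧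
      MvPolynomial.aeval x' g ≠ 0 := by
  let ρ := MvPolynomial.aeval x r
  let E := algebraicClosure (IntermediateField.adjoin k {ρ}) M
  have : IsIntegrallyClosedIn E M := inferInstanceAs
    (IsIntegrallyClosedIn (integralClosure (IntermediateField.adjoin k {ρ}) M) M)
  let A := Algebra.adjoin E (insert (MvPolynomial.aeval x g)⁻¹ (Set.range x))
  have : Algebra.FiniteType E A := (Subalgebra.fg_iff_finiteType _).1
    (Subalgebra.fg_def.2 ⟨_, (Set.finite_range x).insert _, rfl⟩)
  have : IsScalarTower k E M := .of_algebraMap_eq fun _ => rfl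
  obtain ⟨φ⟩ := hM.nonempty_algHom A.val
  let θ : A →ₐ[k] M := (E.val.restrictScalars k).comp (φ.restrictScalars k)
  let y (i : σ) : A := ⟨x i, Algebra.subset_adjoin (.inr ⟨i, rfl⟩)⟩
  let ginv : A := ⟨_, Algebra.subset_adjoin (Set.mem_insert _ _)⟩
  have hval (f : MvPolynomial σ k) :
      (MvPolynomial.aeval y f : A).val = MvPolynomial.aeval x f :=
    MvPolynomial.comp_aeval_apply y (A.val.restrictScalars k) f
  have hθ (f : MvPolynomial σ k) :
      MvPolynomial.aeval (θ ∘ y) f = θ (MvPolynomial.aeval y f) :=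
    (MvPolynomial.comp_aeval_apply y θ f).symm
  refine ⟨θ ∘ y, fun i => mem_algebraicClosure_iff.1 (φ (y i)).2, ?_, fun f hf => ?_, ?_⟩
  · have hρ : ρ ∈ E := mem_algebraicClosure_iff.2 <| isAlgebraic_algebraMap
      (⟨ρ, IntermediateField.mem_adjoin_simple_self k ρ⟩ : IntermediateField.adjoin k {ρ})
    have hr : MvPolynomial.aeval y r = algebraMap E A ⟨ρ, hρ⟩ := Subtype.ext (hval r)
    rw [hθ, hr]
    exact congrArg E.val (φ.commutes _)
  · have hf0 : MvPolynomial.aeval y f = 0 := Subtype.ext ((hval f).trans hf)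
    rw [hθ, hf0, map_zero]
  · rw [hθ]
    have hunit : MvPolynomial.aeval y g * ginv = 1 :=
      Subtype.ext ((congrArg (· * _) (hval g)).trans (mul_inv_cancel₀ hg))
    exact ((IsUnit.of_mul_eq_one _ hunit).map θ).ne_zero

end

end ArtinLang

section AnalyticFamilies

/-- The algebra of real functions analytic at `0`. A polynomial over it is an analytic family of
polynomials, whose member at `t` is its image under `analyticAtZero.eval t`. Functions are not
identified when they agree near `0`, so that members of a family can be taken at any `t`. -/
def analyticAtZero : Subalgebra ℝ (ℝ → ℝ) where
  carrier := {f | AnalyticAt ℝ f 0}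
  mul_mem' := AnalyticAt.mul
  add_mem' := AnalyticAt.add
  algebraMap_mem' _ := analyticAt_const

namespace analyticAtZero

/-- Evaluation of a function analytic at `0`. -/
def eval (t : ℝ) : analyticAtZero →+* ℝ := (Pi.evalRingHom _ t).comp analyticAtZero.val.toRingHom

@[simp]
lemma eval_apply (t : ℝ) (f : analyticAtZero) : eval t f = f.1 t := rfl

/-- Composition with the power map `t ↦ t ^ q`. -/
def compPow (q : ℕ) [NeZero q] : analyticAtZero →+* analyticAtZero where
  toFun f := ⟨fun t => f.1 (t ^ q), f.2.comp_of_eq (analyticAt_id.pow q) (zero_pow (NeZero.ne q))⟩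
  map_one' := rfl
  map_mul' _ _ := rfl
  map_zero' := rfl
  map_add' _ _ := rfl

@[simp]
lemma compPow_apply (q : ℕ) [NeZero q] (f : analyticAtZero) (t : ℝ) :
    (compPow q f).1 t = f.1 (t ^ q) := rfl

lemma analyticAt_eval_map (P : analyticAtZero[X]) (y : ℝ) :
    AnalyticAt ℝ (fun z : ℝ × ℝ => (P.map (eval z.1)).eval z.2) (0, y) := by
  simp only [eval_map, eval₂_eq_sum_range]
  exact Finset.analyticAt_fun_sum _ fun j _ =>
    ((P.coeff j).2.comp_of_eq analyticAt_fst rfl).mul (analyticAt_snd.pow j)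

lemma tendsto_eval_map {α : Type*} {l : Filter α} (P : analyticAtZero[X]) {τ y : α → ℝ} {y₀ : ℝ}
    (hτ : Tendsto τ l (𝓝 0)) (hy : Tendsto y l (𝓝 y₀)) :
    Tendsto (fun n => (P.map (eval (τ n))).eval (y n)) l (𝓝 ((P.map (eval 0)).eval y₀)) :=
  (analyticAt_eval_map P y₀).continuousAt.tendsto.comp (hτ.prodMk_nhds hy)

lemma map_eval_taylor (P : analyticAtZero[X]) (η : analyticAtZero) (t : ℝ) :
    (taylor η P).map (eval t) = taylor (η.1 t) (P.map (eval t)) := by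
  simp [taylor_apply, Polynomial.map_comp]

end analyticAtZero

open analyticAtZero

lemma exists_analyticAt_apply_eq_of_hasDerivAt {f : ℝ × ℝ → ℝ} {t y d : ℝ}
    (hf : AnalyticAt ℝ f (t, y)) (hd : HasDerivAt (fun z => f (t, z)) d y) (hd0 : d ≠ 0) :
    ∃ η : ℝ → ℝ, AnalyticAt ℝ η t ∧ η t = y ∧ ∀ᶠ s in 𝓝 t, f (s, η s) = f (t, y) := by
  let f' : ℝ →L[ℝ] ℝ := fderiv ℝ f (t, y) ∘L .inr ℝ ℝ ℝ
  have hf'_one : f' 1 = d := by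
    have hinr : HasDerivAt (fun z : ℝ => (t, z)) (0, 1) y :=
      (hasDerivAt_const y t).prodMk (hasDerivAt_id y)
    exact (hf.differentiableAt.hasFDerivAt.comp_hasDerivAt y hinr).unique hd
  have hf'_inv : f'.IsInvertible :=
    ⟨ContinuousLinearEquiv.unitsEquivAut ℝ (Units.mk0 d hd0), by ext; simp [hf'_one]⟩
  have hf_smooth : ContDiffAt ℝ ⊤ f (t, y) := hf.contDiffAt
  exact ⟨hf_smooth.implicitFunction (by simp) hf'_inv,
    (hf_smooth.contDiffAt_implicitFunction (by simp) hf'_inv).analyticAt,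
    hf_smooth.implicitFunction_apply_self (by simp) hf'_inv,
    hf_smooth.eventually_apply_implicitFunction (by simp) hf'_inv⟩

lemma coeff_taylor_eq_zero_of_lt_rootMultiplicity {R : Type*} [CommRing R] {p : R[X]} {y : R}
    {j : ℕ} (hj : j < p.rootMultiplicity y) : (taylor y p).coeff j = 0 := by
  rw [rootMultiplicity_eq_natTrailingDegree, ← taylor_apply] at hj
  exact coeff_eq_zero_of_lt_natTrailingDegree hj

lemma coeff_taylor_rootMultiplicity_ne_zero {R : Type*} [CommRing R] {p : R[X]} (hp : p ≠ 0)
    (y : R) : (taylor y p).coeff (p.rootMultiplicity y) ≠ 0 := by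
  rw [rootMultiplicity_eq_natTrailingDegree, ← taylor_apply]
  exact trailingCoeff_nonzero_iff_nonzero.2 ((map_ne_zero_iff _ (taylor_injective y)).2 hp)

lemma exists_taylor_coeff_eventually_eq_zero {P : analyticAtZero[X]} {y : ℝ} {k : ℕ}
    (hk : (taylor y (P.map (eval 0))).coeff k = 0)
    (hk' : (taylor y (P.map (eval 0))).coeff (k + 1) ≠ 0) :
    ∃ η : analyticAtZero, η.1 0 = y ∧ ((taylor η P).coeff k).1 =ᶠ[𝓝 0] 0 := by
  have hcoeff (j : ℕ) (t z : ℝ) :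
      ((hasseDeriv j P).map (eval t)).eval z = (taylor z (P.map (eval t))).coeff j := by
    rw [taylor_coeff]
    congr 1
    ext
    simp [hasseDeriv_coeff]
  have hderiv : derivative (hasseDeriv k P) = ((k + 1 : ℕ) : analyticAtZero[X]) *
      hasseDeriv (k + 1) P := by
    rw [← hasseDeriv_one, ← LinearMap.comp_apply, hasseDeriv_comp]
    simp [add_comm 1 k, add_one_mul]
  have hderiv_ne_zero : (derivative ((hasseDeriv k P).map (eval 0))).eval y ≠ 0 := by
    rw [derivative_map, hderiv, Polynomial.map_mul, eval_mul, hcoeff]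
    refine mul_ne_zero ?_ hk'
    rw [Polynomial.map_natCast, eval_natCast]
    positivity
  obtain ⟨η, hη, hη0, hη_root⟩ := exists_analyticAt_apply_eq_of_hasDerivAt
    (analyticAt_eval_map (hasseDeriv k P) y)
    (((hasseDeriv k P).map (eval 0)).hasDerivAt y) hderiv_ne_zero
  refine ⟨⟨η, hη⟩, hη0, hη_root.mono fun t ht => ?_⟩
  simp only [hcoeff, hk] at ht
  rwa [← eval_apply, ← coeff_map, map_eval_taylor]

-- The least slope `m i / w i`, with `m i` the order of `a i`, is that of the first edge of the
-- Newton polygon.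
lemma exists_comp_pow_eq_pow_mul {ι : Type*} {s : Finset ι} {w : ι → ℕ} {a : ι → analyticAtZero}
    (hw : ∀ i ∈ s, 0 < w i) (ha0 : ∀ i ∈ s, (a i).1 0 = 0)
    (ha : ∃ i ∈ s, ¬ (a i).1 =ᶠ[𝓝 0] 0) :
    ∃ q > 0, ∃ p > 0, ∃ c : ι → analyticAtZero,
      (∀ i ∈ s, ∀ᶠ t in 𝓝 0, (a i).1 (t ^ q) = t ^ (p * w i) * (c i).1 t) ∧
      ∃ i ∈ s, (c i).1 0 ≠ 0 := by
  classical
  have horder (i : ι) (hi : ¬ (a i).1 =ᶠ[𝓝 0] 0) : ∃ m : ℕ, ∃ b : analyticAtZero,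
      b.1 0 ≠ 0 ∧ ∀ᶠ t in 𝓝 0, (a i).1 t = t ^ m * b.1 t := by
    obtain ⟨m, b, hb, hb0, hab⟩ := (a i).2.exists_eventuallyEq_pow_smul_nonzero_iff.2 hi
    exact ⟨m, ⟨b, hb⟩, hb0, by simpa using hab⟩
  choose! m b hb0 hab using horder
  obtain ⟨i₀, hi₀, hmin⟩ := {i ∈ s | ¬ (a i).1 =ᶠ[𝓝 0] 0}.exists_min_image
    (fun i => (m i : ℚ) / w i) (by simpa [Finset.Nonempty] using ha)
  obtain ⟨hi₀s, hai₀⟩ := Finset.mem_filter.1 hi₀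
  have hslope {i : ι} (hi : i ∈ s) (hai : ¬ (a i).1 =ᶠ[𝓝 0] 0) : m i₀ * w i ≤ m i * w i₀ := by
    have := hmin i (Finset.mem_filter.2 ⟨hi, hai⟩)
    rw [div_le_div_iff₀ (mod_cast hw i₀ hi₀s) (mod_cast hw i hi)] at this
    exact_mod_cast this
  have hm : m i₀ ≠ 0 := fun hm => hb0 i₀ hai₀ <| by
    simpa [hm, ha0 i₀ hi₀s] using (hab i₀ hai₀).self_of_nhds.symm
  have : NeZero (w i₀) := ⟨(hw i₀ hi₀s).ne'⟩
  have hpow : Tendsto (fun t : ℝ => t ^ w i₀) (𝓝 0) (𝓝 0) :=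
    (continuous_pow (w i₀)).tendsto' 0 0 (zero_pow (NeZero.ne _))
  refine ⟨w i₀, hw i₀ hi₀s, m i₀, hm.bot_lt, fun i => if (a i).1 =ᶠ[𝓝 0] 0 then 0 else
    ⟨fun t => t ^ (m i * w i₀ - m i₀ * w i), analyticAt_id.pow _⟩ * compPow (w i₀) (b i),
    fun i hi => ?_, i₀, hi₀s, ?_⟩
  · beta_reduce
    split_ifs with hai
    · filter_upwards [hpow.eventually hai] with t ht
      simpa using ht
    · filter_upwards [hpow.eventually (hab i hai)] with t ht
      rw [ht, ← pow_mul, mul_comm (w i₀), ← Nat.add_sub_of_le (hslope hi hai), pow_add, mul_assoc]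
      simp
  · simpa [hai₀, NeZero.ne] using hb0 i₀ hai₀

lemma exists_eval_map_pow_eq_pow_mul {A : analyticAtZero[X]} {m : ℕ} (hm : A.natDegree < m)
    (hA0 : A.map (eval 0) = 0) (hA : ¬ ∀ᶠ t in 𝓝 0, A.map (eval t) = 0) :
    ∃ q > 0, ∃ p > 0, ∃ B : analyticAtZero[X], B.natDegree ≤ A.natDegree ∧ B.map (eval 0) ≠ 0 ∧
      ∀ᶠ t in 𝓝 0, ∀ w, (A.map (eval (t ^ q))).eval (t ^ p * w) =
        (t ^ p) ^ m * (B.map (eval t)).eval w := by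
  have hlt {j : ℕ} (hj : j ∈ A.support) : j < m := (le_natDegree_of_mem_supp j hj).trans_lt hm
  obtain ⟨q, hq, p, hp, c, hc, i, hi, hci⟩ := exists_comp_pow_eq_pow_mul (a := A.coeff)
    (w := fun j => m - j) (s := A.support) (fun j hj => Nat.sub_pos_of_lt (hlt hj))
    (fun j _ => by rw [← eval_apply, ← coeff_map, hA0, coeff_zero]) (by
      contrapose! hA
      filter_upwards [A.support.eventually_all.2 hA] with t ht
      ext j
      by_cases hj : j ∈ A.support
      · simpa using ht j hj
      · simp [notMem_support_iff.1 hj])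
  let B : analyticAtZero[X] := ∑ j ∈ A.support, C (c j) * X ^ j
  refine ⟨q, hq, p, hp, B, natDegree_sum_le_of_forall_le _ _ fun j hj =>
    (natDegree_C_mul_X_pow_le _ _).trans (le_natDegree_of_mem_supp j hj), fun hB => hci ?_, ?_⟩
  · simpa [B, finsetSum_coeff, coeff_C_mul, coeff_X_pow, mem_support_iff.1 hi]
      using congr(coeff $hB i)
  · filter_upwards [A.support.eventually_all.2 hc] with t ht w
    simp only [B, eval_map, eval₂_finsetSum, Finset.mul_sum, eval₂_eq_sum (p := A),
      Polynomial.sum_def]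
    refine Finset.sum_congr rfl fun j hj => ?_
    rw [eval₂_mul, eval₂_C, eval₂_X_pow, eval_apply, eval_apply, ht j hj, pow_mul, mul_pow]
    rw [← pow_sub_mul_pow (t ^ p) (hlt hj).le]
    ring

-- Multiplicity `k + 1` would make the polynomial equal to `b (X - w) ^ (k + 1)`, and the missing
-- term in `X ^ k` would force `w = 0`.
lemma rootMultiplicity_add_C_mul_X_pow_lt {K : Type*} [Field K] [CharZero K] {p : K[X]} {b : K}
    {k : ℕ} (hp0 : p ≠ 0) (hp : p.natDegree < k) (hb : b ≠ 0) (w : K) :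
    (p + C b * X ^ (k + 1)).rootMultiplicity w < k + 1 := by
  by_contra! hle
  let f := p + C b * X ^ (k + 1)
  have hdeg : p.natDegree < (C b * X ^ (k + 1)).natDegree := by
    rw [natDegree_C_mul_X_pow _ _ hb]
    exact hp.trans k.lt_succ_self
  have hf : f = C b * (X - C w) ^ (k + 1) := by
    have hlead : f.leadingCoeff = b := by
      rw [leadingCoeff_add_of_degree_lt (degree_lt_degree hdeg), leadingCoeff_C_mul_X_pow]
    nth_rw 1 [← hlead]
    refine eq_leadingCoeff_mul_of_monic_of_dvd_of_natDegree_le ((monic_X_sub_C w).pow _)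
      ((pow_dvd_pow _ hle).trans (pow_rootMultiplicity_dvd f w)) ?_
    rw [natDegree_add_eq_right_of_natDegree_lt hdeg, natDegree_C_mul_X_pow _ _ hb,
      natDegree_pow, natDegree_X_sub_C, mul_one]
  have hw : w = 0 := by
    have hcoeff := congr(coeff $hf k)
    rw [sub_eq_add_neg, ← C_neg, coeff_C_mul, coeff_X_add_C_pow] at hcoeff
    simpa [f, coeff_eq_zero_of_natDegree_lt hp, coeff_X_pow, hb,
      Nat.cast_add_one_ne_zero] using hcoeff
  rw [hw, C_0, sub_zero] at hf
  exact hp0 (add_eq_right.1 hf)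

lemma exists_tendsto_of_isRoot {α K : Type*} [NormedField K] [ProperSpace K] {u : Ultrafilter α}
    {p : α → K[X]} {q : K[X]} {w : α → K} (hq : q ≠ 0)
    (hdeg : ∀ᶠ a in u, (p a).natDegree ≤ q.natDegree)
    (hcoeff : ∀ i, Tendsto (fun a => (p a).coeff i) u (𝓝 (q.coeff i)))
    (hw : ∀ᶠ a in u, (p a).IsRoot (w a)) : ∃ w₀, Tendsto w u (𝓝 w₀) := by
  have hbound : ∀ᶠ a in u, w a ∈ Metric.closedBall 0 (cauchyBound q + 1 : ℝ) := by
    filter_upwards [hw, (tendsto_cauchyBound hq hdeg hcoeff).eventually_le_const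
      (lt_add_one (cauchyBound q)), (hcoeff q.natDegree).eventually_ne (leadingCoeff_ne_zero.2 hq)]
      with a hwa hle hne
    have hp : p a ≠ 0 := fun h => hne (by simp [h])
    rw [mem_closedBall_zero_iff]
    exact_mod_cast (hwa.norm_lt_cauchyBound hp).le.trans (mod_cast hle)
  obtain ⟨w₀, -, hw₀⟩ := (isCompact_closedBall (0 : K) _).ultrafilter_le_nhds (u.map w)
    (le_principal_iff.2 hbound)
  exact ⟨w₀, hw₀⟩

lemma exists_degree_lt_and_eq_add_C_mul_X_pow_add {R : Type*} [CommRing R] (p : R[X]) (k : ℕ) :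
    ∃ a b : R[X], a.degree < k ∧ p = a + C (p.coeff k) * X ^ k + X ^ (k + 1) * b := by
  let a : R[X] := ∑ j ∈ Finset.range k, C (p.coeff j) * X ^ j
  have ha (j : ℕ) : a.coeff j = if j < k then p.coeff j else 0 := by
    simp [a, finsetSum_coeff, coeff_X_pow]
  obtain ⟨b, hb⟩ : X ^ (k + 1) ∣ p - (a + C (p.coeff k) * X ^ k) := by
    refine X_pow_dvd_iff.2 fun j hj => ?_
    obtain hjk | rfl := Nat.lt_succ_iff_lt_or_eq.1 hj
    · simp [ha, hjk, hjk.ne, coeff_X_pow]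
    · simp [ha]
  refine ⟨a, b, (degree_lt_iff_coeff_zero _ _).2 fun j hj => ?_, by rw [← hb]; ring⟩
  rw [ha, if_neg hj.not_gt]

-- The family is translated by the root `η` of its `k`-th derivative, which is simple at `0`; this
-- removes the term in `X ^ k`.
lemma exists_tschirnhaus {P : analyticAtZero[X]} {y : ℝ} {k : ℕ} (hP : P.map (eval 0) ≠ 0)
    (hk : (P.map (eval 0)).rootMultiplicity y = k + 1) :
    ∃ (η : analyticAtZero) (A U : analyticAtZero[X]), η.1 0 = y ∧ A.degree < k ∧
      A.map (eval 0) = 0 ∧ (U.map (eval 0)).eval 0 ≠ 0 ∧ ∀ᶠ t in 𝓝 0,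
        taylor (η.1 t) (P.map (eval t)) = (A + X ^ (k + 1) * U).map (eval t) := by
  have hlow {j : ℕ} (hj : j < k + 1) : (taylor y (P.map (eval 0))).coeff j = 0 :=
    coeff_taylor_eq_zero_of_lt_rootMultiplicity (hk ▸ hj)
  have hlead : (taylor y (P.map (eval 0))).coeff (k + 1) ≠ 0 :=
    hk ▸ coeff_taylor_rootMultiplicity_ne_zero hP y
  obtain ⟨η, hη, hcoeff⟩ := exists_taylor_coeff_eventually_eq_zero (hlow k.lt_succ_self) hlead
  obtain ⟨A, U, hA, hAU⟩ := exists_degree_lt_and_eq_add_C_mul_X_pow_add (taylor η P) k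
  have hmap : ∀ᶠ t in 𝓝 0,
      taylor (η.1 t) (P.map (eval t)) = (A + X ^ (k + 1) * U).map (eval t) := by
    filter_upwards [hcoeff] with t ht
    rw [← map_eval_taylor, hAU]
    simp [ht]
  have hmap_zero := hmap.self_of_nhds
  rw [hη, Polynomial.map_add, Polynomial.map_mul, Polynomial.map_pow, map_X] at hmap_zero
  have hA_coeff {j : ℕ} (hj : k ≤ j) : (A.map (eval 0)).coeff j = 0 := by
    rw [coeff_map, (degree_lt_iff_coeff_zero _ _).1 hA j hj, map_zero]
  refine ⟨η, A, U, hη, hA, ?_, ?_, hmap⟩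
  · ext j
    obtain hj | hj := lt_or_ge j k
    · have := hlow (hj.trans k.lt_succ_self)
      rwa [hmap_zero, coeff_add, coeff_X_pow_mul', if_neg (by lia), add_zero] at this
    · exact hA_coeff hj
  · rwa [hmap_zero, coeff_add, hA_coeff k.le_succ, zero_add, coeff_X_pow_mul', if_pos le_rfl,
      Nat.sub_self, coeff_zero_eq_eval_zero] at hlead

lemma exists_newton_transform {A U : analyticAtZero[X]} {m : ℕ} (hm : A.natDegree < m)
    (hA0 : A.map (eval 0) = 0) (hA : ¬ ∀ᶠ t in 𝓝 0, A.map (eval t) = 0) :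
    ∃ q > 0, ∃ p > 0, ∃ B V : analyticAtZero[X], B.natDegree ≤ A.natDegree ∧ B.map (eval 0) ≠ 0 ∧
      (∀ t w, (V.map (eval t)).eval w = (U.map (eval (t ^ q))).eval (t ^ p * w)) ∧
      ∀ᶠ t in 𝓝 0, ∀ w, ((A + X ^ m * U).map (eval (t ^ q))).eval (t ^ p * w) =
        (t ^ p) ^ m * ((B + X ^ m * V).map (eval t)).eval w := by
  obtain ⟨q, hq, p, hp, B, hB_deg, hB0, hB⟩ := exists_eval_map_pow_eq_pow_mul hm hA0 hA
  have : NeZero q := ⟨hq.ne'⟩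
  let V : analyticAtZero[X] :=
    (U.map (compPow q)).comp (C ⟨fun t => t ^ p, analyticAt_id.pow p⟩ * X)
  have hV (t w) : (V.map (eval t)).eval w = (U.map (eval (t ^ q))).eval (t ^ p * w) := by
    have hcomp : (analyticAtZero.eval t).comp (compPow q) = analyticAtZero.eval (t ^ q) := rfl
    simp [V, Polynomial.map_comp, Polynomial.map_map, hcomp]
  refine ⟨q, hq, p, hp, B, V, hB_deg, hB0, hV, hB.mono fun t ht w => ?_⟩
  simp only [Polynomial.map_add, Polynomial.map_mul, Polynomial.map_pow, map_X, eval_add, eval_mul,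
    eval_pow, eval_X, ht, hV]
  ring

lemma exists_tendsto_of_eval_add_X_pow_mul_eq_zero {α : Type*} {u : Ultrafilter α}
    {B V : analyticAtZero[X]} {m : ℕ} (hm : B.natDegree < m) {σ w : α → ℝ} {b : ℝ}
    (hσ : Tendsto σ u (𝓝 0)) (hb : b ≠ 0)
    (hV : Tendsto (fun n => (V.map (eval (σ n))).eval (w n)) u (𝓝 b))
    (hroot : ∀ᶠ n in u, ((B + X ^ m * V).map (eval (σ n))).eval (w n) = 0) :
    ∃ w₀, Tendsto w u (𝓝 w₀) := by
  have hdeg (t c : ℝ) : (B.map (eval t) + C c * X ^ m).natDegree ≤ m :=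
    natDegree_add_le_of_degree_le (natDegree_map_le.trans hm.le) (natDegree_C_mul_X_pow_le _ _)
  have hdeg_eq : (B.map (eval 0) + C b * X ^ m).natDegree = m := by
    rw [natDegree_add_eq_right_of_natDegree_lt, natDegree_C_mul_X_pow _ _ hb]
    rw [natDegree_C_mul_X_pow _ _ hb]
    exact natDegree_map_le.trans_lt hm
  refine exists_tendsto_of_isRoot (q := B.map (eval 0) + C b * X ^ m)
    (p := fun n => B.map (eval (σ n)) + C ((V.map (eval (σ n))).eval (w n)) * X ^ m)
    (ne_zero_of_natDegree_gt (n := B.natDegree) (by rwa [hdeg_eq]))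
    (.of_forall fun n => by simpa only [hdeg_eq] using hdeg _ _) (fun i => ?_) (hroot.mono ?_)
  · simp only [coeff_add, coeff_map, eval_apply, coeff_C_mul]
    exact ((B.coeff i).2.continuousAt.tendsto.comp hσ).add (hV.mul_const _)
  · intro n hn
    simpa only [IsRoot.def, Polynomial.map_add, Polynomial.map_mul, Polynomial.map_pow, map_X,
      eval_add, eval_mul, eval_pow, eval_X, eval_C, mul_comm] using hn

lemma tendsto_rpow_inv_natCast_zero {α : Type*} {l : Filter α} {τ : α → ℝ}
    (hτ : Tendsto τ l (𝓝 0)) {q : ℕ} (hq : 0 < q) :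
    Tendsto (fun n => τ n ^ (q⁻¹ : ℝ)) l (𝓝 0) := by
  have hq' : (0 : ℝ) < (q : ℝ)⁻¹ := by positivity
  simpa [Real.zero_rpow hq'.ne'] using hτ.rpow_const (.inr hq'.le)

lemma exists_newton_step {α : Type*} {u : Ultrafilter α} {A U : analyticAtZero[X]} {k : ℕ}
    (hA_deg : A.natDegree < k) (hA0 : A.map (eval 0) = 0)
    (hA : ¬ ∀ᶠ t in 𝓝 0, A.map (eval t) = 0) (hU : (U.map (eval 0)).eval 0 ≠ 0) {τ x : α → ℝ}
    (hτ_pos : ∀ᶠ n in u, 0 < τ n) (hτ : Tendsto τ u (𝓝 0)) (hx : Tendsto x u (𝓝 0))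
    (hroot : ∀ᶠ n in u, ((A + X ^ (k + 1) * U).map (eval (τ n))).eval (x n) = 0) :
    ∃ q : ℕ, 0 < q ∧ ∃ (p : ℕ) (R : analyticAtZero[X]) (w : α → ℝ) (w₀ : ℝ), R.map (eval 0) ≠ 0 ∧
      (R.map (eval 0)).rootMultiplicity w₀ < k + 1 ∧ Tendsto w u (𝓝 w₀) ∧
      (∀ᶠ n in u, x n = (τ n ^ (q⁻¹ : ℝ)) ^ p * w n) ∧
      ∀ᶠ n in u, (R.map (eval (τ n ^ (q⁻¹ : ℝ)))).eval (w n) = 0 := by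
  obtain ⟨q, hq, p, hp, B, V, hB_deg, hB0, hV, hBV⟩ :=
    exists_newton_transform (U := U) (hA_deg.trans k.lt_succ_self) hA0 hA
  let σ (n : α) : ℝ := τ n ^ (q⁻¹ : ℝ)
  let w (n : α) : ℝ := x n / σ n ^ p
  have hσ : Tendsto σ u (𝓝 0) := tendsto_rpow_inv_natCast_zero hτ hq
  have hσ_pow : ∀ᶠ n in u, σ n ^ q = τ n :=
    hτ_pos.mono fun n hn => Real.rpow_inv_natCast_pow hn.le hq.ne'
  have hσ_ne : ∀ᶠ n in u, σ n ^ p ≠ 0 :=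
    hτ_pos.mono fun n hn => (pow_pos (Real.rpow_pos_of_pos hn _) p).ne'
  have hx_eq : ∀ᶠ n in u, x n = σ n ^ p * w n :=
    hσ_ne.mono fun n hn => (mul_div_cancel₀ _ hn).symm
  have hR_root : ∀ᶠ n in u, ((B + X ^ (k + 1) * V).map (eval (σ n))).eval (w n) = 0 := by
    filter_upwards [hσ_ne, hσ_pow, hx_eq, hroot, hσ.eventually hBV] with n hσn hτn hxn hrn hBn
    refine (mul_eq_zero.1 ?_).resolve_left (pow_ne_zero (k + 1) hσn)
    rw [← hBn, hτn, ← hxn, hrn]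
  have hV_lim : Tendsto (fun n => (V.map (eval (σ n))).eval (w n)) u
      (𝓝 ((U.map (eval 0)).eval 0)) := by
    refine (tendsto_eval_map U hτ hx).congr' ?_
    filter_upwards [hσ_pow, hx_eq] with n hτn hxn
    rw [hV, hτn, ← hxn]
  obtain ⟨w₀, hw₀⟩ := exists_tendsto_of_eval_add_X_pow_mul_eq_zero
    ((hB_deg.trans_lt hA_deg).trans k.lt_succ_self) hσ hU hV_lim hR_root
  have hV0 : V.map (eval 0) = C ((U.map (eval 0)).eval 0) := Polynomial.funext fun z => by
    rw [hV, zero_pow hp.ne', zero_pow hq.ne', zero_mul, eval_C]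
  have hR0 : (B + X ^ (k + 1) * V).map (eval 0) =
      B.map (eval 0) + C ((U.map (eval 0)).eval 0) * X ^ (k + 1) := by
    rw [Polynomial.map_add, Polynomial.map_mul, Polynomial.map_pow, map_X, hV0, mul_comm]
  have hB0_deg : (B.map (eval 0)).natDegree < k :=
    natDegree_map_le.trans_lt (hB_deg.trans_lt hA_deg)
  refine ⟨q, hq, p, _, w, w₀, fun h => hU ?_, ?_, hw₀, hx_eq, hR_root⟩
  · have hcoeff := congr(coeff $(hR0.symm.trans h) (k + 1))
    rw [coeff_add, coeff_eq_zero_of_natDegree_lt (hB0_deg.trans k.lt_succ_self)] at hcoeff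
    simpa using hcoeff
  · rw [hR0]
    exact rootMultiplicity_add_C_mul_X_pow_lt hB0 hB0_deg hU w₀

/-- A family of points `y n` is Puiseux along a filter in a real parameter `τ n` when it is an
analytic function of some root `τ n ^ (1 / d)`, eventually. -/
def IsPuiseuxAlong {α E : Type*} [NormedAddCommGroup E] [NormedSpace ℝ E] (l : Filter α)
    (τ : α → ℝ) (y : α → E) : Prop :=
  ∃ d : ℕ, 0 < d ∧ ∃ φ : ℝ → E, AnalyticAt ℝ φ 0 ∧ ∀ᶠ n in l, y n = φ (τ n ^ (d⁻¹ : ℝ))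

namespace IsPuiseuxAlong

variable {α : Type*} {l : Filter α} {τ : α → ℝ}

section

variable {E F : Type*} [NormedAddCommGroup E] [NormedSpace ℝ E] [NormedAddCommGroup F]
  [NormedSpace ℝ F]

lemma comp_analytic {y : α → E} (h : IsPuiseuxAlong l τ y) (hτ : ∀ᶠ n in l, 0 < τ n)
    {G : ℝ × E → F} (hG : ∀ z, AnalyticAt ℝ G (0, z)) :
    IsPuiseuxAlong l τ fun n => G (τ n, y n) := by
  obtain ⟨d, hd, φ, hφ, hy⟩ := h
  refine ⟨d, hd, fun s => G (s ^ d, φ s), ?_, ?_⟩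
  · exact (hG (φ 0)).comp_of_eq ((analyticAt_id.pow d).prod hφ) (by simp [hd.ne'])
  · filter_upwards [hτ, hy] with n hn hyn
    rw [Real.rpow_inv_natCast_pow hn.le hd.ne', hyn]

lemma of_rpow {y : α → E} {q : ℕ} (h : IsPuiseuxAlong l (fun n => τ n ^ (q⁻¹ : ℝ)) y)
    (hq : 0 < q) (hτ : ∀ᶠ n in l, 0 < τ n) : IsPuiseuxAlong l τ y := by
  obtain ⟨d, hd, φ, hφ, hy⟩ := h
  refine ⟨q * d, Nat.mul_pos hq hd, φ, hφ, ?_⟩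
  filter_upwards [hτ, hy] with n hn hyn
  rw [hyn, ← Real.rpow_mul hn.le, Nat.cast_mul, mul_inv]

end

lemma pi {σ : Type*} [Fintype σ] {y : α → σ → ℝ} (hτ : ∀ᶠ n in l, 0 < τ n)
    (h : ∀ i, IsPuiseuxAlong l τ fun n => y n i) : IsPuiseuxAlong l τ y := by
  choose d hd φ hφ hy using h
  have hD : 0 < ∏ i, d i := Finset.prod_pos fun i _ => hd i
  choose e he using fun i => Finset.dvd_prod_of_mem d (Finset.mem_univ i)
  have he0 (i : σ) : e i ≠ 0 := right_ne_zero_of_mul (he i ▸ hD.ne')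
  refine ⟨∏ i, d i, hD, fun s i => φ i (s ^ e i), AnalyticAt.pi fun i => ?_, ?_⟩
  · exact (hφ i).comp_of_eq (analyticAt_id.pow _) (zero_pow (he0 i))
  · filter_upwards [hτ, eventually_all.2 hy] with n hn hyn
    ext i
    have hexp : ((∏ i, d i : ℕ) : ℝ)⁻¹ * e i = (d i : ℝ)⁻¹ := by
      rw [he i, Nat.cast_mul, mul_inv, mul_assoc, inv_mul_cancel₀ (mod_cast he0 i), mul_one]
    rw [hyn, ← Real.rpow_natCast, ← Real.rpow_mul hn.le, hexp]

end IsPuiseuxAlong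

theorem isPuiseuxAlong_of_eval_map_eq_zero {α : Type*} {u : Ultrafilter α} {P : analyticAtZero[X]}
    (hP : P.map (eval 0) ≠ 0) {τ y : α → ℝ} {y₀ : ℝ} (hτ_pos : ∀ᶠ n in u, 0 < τ n)
    (hτ : Tendsto τ u (𝓝 0)) (hy : Tendsto y u (𝓝 y₀))
    (hroot : ∀ᶠ n in u, (P.map (eval (τ n))).eval (y n) = 0) : IsPuiseuxAlong u τ y := by
  induction hk : (P.map (eval 0)).rootMultiplicity y₀ using Nat.strong_induction_on
    generalizing P τ y y₀ with | _ m ih => ?_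
  obtain - | k := m
  · have hroot₀ : (P.map (eval 0)).IsRoot y₀ :=
      tendsto_nhds_unique (tendsto_eval_map P hτ hy) (tendsto_const_nhds.congr' (hroot.mono
        fun n hn => hn.symm))
    exact absurd hk ((rootMultiplicity_pos hP).2 hroot₀).ne'
  obtain ⟨η, A, U, hη0, hA_deg, hA0, hU, hAU⟩ := exists_tschirnhaus hP hk
  let x (n : α) : ℝ := y n - η.1 (τ n)
  have hx : Tendsto x u (𝓝 0) := by
    simpa [hη0] using hy.sub (η.2.continuousAt.tendsto.comp hτ)
  have hroot_x : ∀ᶠ n in u, ((A + X ^ (k + 1) * U).map (eval (τ n))).eval (x n) = 0 := by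
    filter_upwards [hroot, hτ.eventually hAU] with n hn hAUn
    rw [← hAUn, taylor_eval, sub_add_cancel, hn]
  suffices hx_puiseux : IsPuiseuxAlong u τ x by
    have hG (z : ℝ) : AnalyticAt ℝ (fun v : ℝ × ℝ => v.2 + η.1 v.1) (0, z) :=
      analyticAt_snd.add (η.2.comp_of_eq analyticAt_fst rfl)
    simpa [x] using hx_puiseux.comp_analytic hτ_pos hG
  by_cases hA : ∀ᶠ t in 𝓝 0, A.map (eval t) = 0
  · refine ⟨1, one_pos, 0, analyticAt_const, ?_⟩
    filter_upwards [hroot_x, hτ.eventually hA, (tendsto_eval_map U hτ hx).eventually_ne hU]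
      with n hn hAn hUn
    simpa [hAn, hUn] using hn
  have hA_ne : A ≠ 0 := by rintro rfl; simp at hA
  obtain ⟨q, hq, p, R, w, w₀, hR, hR_mult, hw, hxw, hR_root⟩ := exists_newton_step
    ((natDegree_lt_iff_degree_lt hA_ne).2 hA_deg) hA0 hA hU hτ_pos hτ hx hroot_x
  have hσ_pos : ∀ᶠ n in u, 0 < τ n ^ (q⁻¹ : ℝ) :=
    hτ_pos.mono fun n hn => Real.rpow_pos_of_pos hn _
  have hw_puiseux := ih _ hR_mult hR hσ_pos (tendsto_rpow_inv_natCast_zero hτ hq) hw hR_root rfl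
  have hG (z : ℝ) : AnalyticAt ℝ (fun v : ℝ × ℝ => v.1 ^ p * v.2) (0, z) :=
    (analyticAt_fst.pow p).mul analyticAt_snd
  obtain ⟨d, hd, φ, hφ, h⟩ := (hw_puiseux.comp_analytic hσ_pos hG).of_rpow hq hτ_pos
  exact ⟨d, hd, φ, hφ, hxw.and h |>.mono fun n hn => hn.1.trans hn.2⟩

theorem isPuiseuxAlong_of_evalEval_eq_zero {α : Type*} {u : Ultrafilter α} {P : ℝ[X][X]}
    (hP : P ≠ 0) {τ y : α → ℝ} {y₀ : ℝ} (hτ_pos : ∀ᶠ n in u, 0 < τ n)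
    (hτ : Tendsto τ u (𝓝 0)) (hy : Tendsto y u (𝓝 y₀))
    (hroot : ∀ᶠ n in u, P.evalEval (τ n) (y n) = 0) : IsPuiseuxAlong u τ y := by
  have hX : ¬ IsUnit (C X : ℝ[X][X]) := isUnit_C.not.2 not_isUnit_X
  obtain ⟨Q, hPQ, hQ⟩ := (FiniteMultiplicity.of_not_isUnit hX hP).exists_eq_pow_mul_and_not_dvd
  let ι : ℝ[X] →+* analyticAtZero :=
    (aeval ⟨id, analyticAt_id⟩ : ℝ[X] →ₐ[ℝ] analyticAtZero).toRingHom
  have hι (t : ℝ) : (analyticAtZero.eval t).comp ι = evalRingHom t := by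
    ext <;> simp [ι]
  have hQ_map (t : ℝ) : (Q.map ι).map (eval t) = Q.map (evalRingHom t) := by
    rw [Polynomial.map_map, hι]
  refine isPuiseuxAlong_of_eval_map_eq_zero (P := Q.map ι) (fun h => hQ ?_) hτ_pos hτ hy ?_
  · rw [C_dvd_iff_dvd_coeff]
    intro i
    rw [X_dvd_iff, coeff_zero_eq_eval_zero, ← coe_evalRingHom, ← coeff_map, ← hQ_map, h, coeff_zero]
  · filter_upwards [hτ_pos, hroot] with n hn hroot_n
    rw [hQ_map, map_evalRingHom_eval]
    rw [hPQ] at hroot_n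
    simpa [evalEval_mul, evalEval_pow, evalEval_C, hn.ne'] using hroot_n

end AnalyticFamilies

section CurveSelection

lemma exists_aevalAeval_eq_zero_of_isAlgebraic_adjoin {k K : Type*} [Field k] [Field K]
    [Algebra k K] {ρ y : K} (hy : IsAlgebraic (IntermediateField.adjoin k {ρ}) y) :
    ∃ P : k[X][X], P ≠ 0 ∧ aevalAeval ρ y P = 0 := by
  open scoped IntermediateField.algebraAdjoinAdjoin in
  have hy_adjoin : IsAlgebraic (Algebra.adjoin k {ρ}) y :=
    (IsFractionRing.isAlgebraic_iff _ (IntermediateField.adjoin k {ρ}) K).2 hy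
  let φ : k[X] →ₐ[k] Algebra.adjoin k {ρ} := aeval ⟨ρ, Algebra.self_mem_adjoin_singleton k ρ⟩
  have hφ (q : k[X]) : (φ q : K) = aeval ρ q := aeval_subalgebra_coe q _ _
  have hφ_surj : Function.Surjective φ.toRingHom := fun ⟨z, hz⟩ => by
    obtain ⟨q, rfl⟩ := (Algebra.adjoin_singleton_eq_range_aeval k ρ).le hz
    exact ⟨q, Subtype.ext (hφ q)⟩
  obtain ⟨p, hp0, hp⟩ := hy_adjoin
  obtain ⟨P, rfl⟩ := map_surjective _ hφ_surj p
  refine ⟨P, fun h => hp0 (by rw [h, Polynomial.map_zero]), ?_⟩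
  have hφ_eval : aevalAeval ρ y = ((aeval y).restrictScalars k).comp (mapAlgHom φ) := by
    ext <;> simp [hφ]
  rw [hφ_eval]
  exact hp

section Germ

variable {α R A : Type*} [CommSemiring R] [CommSemiring A] [Algebra R A] {l : Filter α}

instance : Algebra R (Germ l A) where
  algebraMap := (Germ.coeRingHom l).comp (algebraMap R (α → A))
  commutes' _ _ := mul_comm _ _
  smul_def' r f := by
    induction f using Germ.inductionOn with | _ f => ?_
    exact congr_arg _ (Algebra.smul_def r f)

variable (R A l) in
/-- The passage from functions to germs along `l`, as an algebra homomorphism. -/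
def germAlgHom : (α → A) →ₐ[R] Germ l A where
  toRingHom := Germ.coeRingHom l
  commutes' _ := rfl

lemma aevalAeval_germ (P : R[X][X]) (τ y : α → A) :
    aevalAeval (τ : Germ l A) y P = (fun n => aevalAeval (τ n) (y n) P : α → A) := by
  have hmap : aevalAeval (τ : Germ l A) y = (germAlgHom R A l).comp (aevalAeval τ y) := by
    ext <;> simp <;> rfl
  have hpi (n : α) : aevalAeval (τ n) (y n) = (Pi.evalAlgHom R _ n).comp (aevalAeval τ y) := by
    ext <;> simp
  simp only [hmap, hpi]
  rfl

lemma aeval_germ {σ : Type*} (f : MvPolynomial σ R) (x : α → σ → A) :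
    MvPolynomial.aeval (fun i => ((fun n => x n i : α → A) : Germ l A)) f =
      (fun n => MvPolynomial.aeval (x n) f : α → A) := by
  have hpi (n : α) := MvPolynomial.comp_aeval_apply (fun i n => x n i) (Pi.evalAlgHom R _ n) f
  refine (MvPolynomial.comp_aeval_apply (fun i n => x n i) (germAlgHom R A l) f).symm.trans ?_
  exact congr_arg _ (funext hpi)

end Germ

theorem RootContinuation.exists_isAlgebraic_along {K α σ : Type*} [Field K] [LinearOrder K]
    [IsStrictOrderedRing K] [Finite σ] (hK : RootContinuation K) (u : Ultrafilter α)
    (x : α → σ → K) (r g : MvPolynomial σ K) (hg : ∀ᶠ n in u, MvPolynomial.eval (x n) g ≠ 0) :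
    ∃ x' : α → σ → K,
      (∀ i, ∃ P : K[X][X], P ≠ 0 ∧
        ∀ᶠ n in u, P.evalEval (MvPolynomial.eval (x n) r) (x' n i) = 0) ∧
      (∀ᶠ n in u, MvPolynomial.eval (x' n) r = MvPolynomial.eval (x n) r) ∧
      (∀ f, (∀ᶠ n in u, MvPolynomial.eval (x n) f = 0) →
        ∀ᶠ n in u, MvPolynomial.eval (x' n) f = 0) ∧
      ∀ᶠ n in u, MvPolynomial.eval (x' n) g ≠ 0 := by
  let germ (z : α → σ → K) (i : σ) : Germ (u : Filter α) K := ((fun n => z n i : α → K))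
  have h_zero (z : α → σ → K) (f : MvPolynomial σ K) :
      MvPolynomial.aeval (germ z) f = 0 ↔ ∀ᶠ n in u, MvPolynomial.eval (z n) f = 0 := by
    rw [aeval_germ]
    exact Germ.coe_eq
  obtain ⟨y, hy_alg, hy_r, hy_f, hy_g⟩ := (hK.germ u).exists_isAlgebraic_point (germ x) r g
    ((h_zero x g).not.2 (Ultrafilter.eventually_not.1 hg))
  choose x' hx' using fun i => Quotient.exists_rep (y i)
  obtain rfl : germ (fun n i => x' i n) = y := funext hx'
  rw [aeval_germ] at hy_alg
  refine ⟨fun n i => x' i n, fun i => ?_, ?_,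
    fun f hf => (h_zero _ f).1 (hy_f f ((h_zero x f).2 hf)),
    Ultrafilter.eventually_not.2 ((h_zero _ g).not.1 hy_g)⟩
  · obtain ⟨P, hP0, hP⟩ := exists_aevalAeval_eq_zero_of_isAlgebraic_adjoin (hy_alg i)
    rw [aevalAeval_germ] at hP
    simp only [coe_aevalAeval_eq_evalEval] at hP
    exact ⟨P, hP0, Germ.coe_eq.1 hP⟩
  · rw [aeval_germ, aeval_germ] at hy_r
    exact Germ.coe_eq.1 hy_r

lemma IsPuiseuxAlong.exists_curve {α E : Type*} [NormedAddCommGroup E] [NormedSpace ℝ E]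
    {l : Filter α} [l.NeBot] {τ : α → ℝ} {y : α → E} {y₀ : E} (h : IsPuiseuxAlong l τ y)
    (hτ_pos : ∀ᶠ n in l, 0 < τ n) (hτ : Tendsto τ l (𝓝 0)) (hy : Tendsto y l (𝓝 y₀)) :
    ∃ c : ℝ → E, AnalyticAt ℝ c 0 ∧ c 0 = y₀ ∧
      ∃ s : α → ℝ, Tendsto s l (𝓝[≠] 0) ∧ ∀ᶠ n in l, y n = c (s n) := by
  obtain ⟨d, hd, c, hc, hyc⟩ := h
  have hs := tendsto_rpow_inv_natCast_zero hτ hd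
  refine ⟨c, hc, ?_, _, tendsto_nhdsWithin_iff.2 ⟨hs, ?_⟩, hyc⟩
  · exact tendsto_nhds_unique (hc.continuousAt.tendsto.comp hs) (hy.congr' hyc)
  · exact hτ_pos.mono fun n hn => (Real.rpow_pos_of_pos hn _).ne'

section

variable {σ ι : Type*} [Fintype σ] [Finite ι] {F : ι → MvPolynomial σ ℝ} {g : MvPolynomial σ ℝ}
  {a : σ → ℝ}

lemma exists_isPuiseuxAlong_of_eval_eq_zero {α : Type*} {u : Ultrafilter α} {x : α → σ → ℝ}
    (hx_ne : ∀ᶠ n in u, x n ≠ a) (hx : Tendsto x u (𝓝 a))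
    (hg : ∀ᶠ n in u, MvPolynomial.eval (x n) g ≠ 0) :
    ∃ τ : α → ℝ, ∃ x' : α → σ → ℝ, (∀ᶠ n in u, 0 < τ n) ∧ Tendsto τ u (𝓝 0) ∧
      Tendsto x' u (𝓝 a) ∧ IsPuiseuxAlong u τ x' ∧
      (∀ f, (∀ᶠ n in u, MvPolynomial.eval (x n) f = 0) →
        ∀ᶠ n in u, MvPolynomial.eval (x' n) f = 0) ∧
      ∀ᶠ n in u, MvPolynomial.eval (x' n) g ≠ 0 := by
  let r : MvPolynomial σ ℝ := ∑ i, (MvPolynomial.X i - MvPolynomial.C (a i)) ^ 2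
  have hr (z : σ → ℝ) : MvPolynomial.eval z r = ∑ i, (z i - a i) ^ 2 := by simp [r]
  let τ (n : α) : ℝ := MvPolynomial.eval (x n) r
  obtain ⟨x', hx'_alg, hx'_r, hx'_f, hx'_g⟩ :=
    rootContinuation_real.exists_isAlgebraic_along u x r g hg
  have hτ_pos : ∀ᶠ n in u, 0 < τ n := by
    filter_upwards [hx_ne] with n hn
    obtain ⟨i, hi⟩ := Function.ne_iff.1 hn
    simp only [τ, hr]
    exact Finset.sum_pos' (fun _ _ => sq_nonneg _)
      ⟨i, Finset.mem_univ i, sq_pos_of_ne_zero (sub_ne_zero.2 hi)⟩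
  have hτ : Tendsto τ u (𝓝 0) := by
    have hcont : Continuous fun z : σ → ℝ => MvPolynomial.eval z r := MvPolynomial.continuous_eval r
    exact (hcont.tendsto' a 0 (by simp [hr])).comp hx
  have hx'_lim : Tendsto x' u (𝓝 a) := by
    refine tendsto_pi_nhds.2 fun i => tendsto_iff_norm_sub_tendsto_zero.2 ?_
    refine squeeze_zero' (.of_forall fun _ => norm_nonneg _) ?_ (Real.sqrt_zero ▸ hτ.sqrt)
    filter_upwards [hx'_r] with n hn
    refine Real.abs_le_sqrt ?_
    rw [show τ n = _ from hn.symm, hr]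
    exact Finset.single_le_sum (f := fun i => (x' n i - a i) ^ 2) (fun _ _ => sq_nonneg _)
      (Finset.mem_univ i)
  have hx'_puiseux : IsPuiseuxAlong u τ x' := .pi hτ_pos fun i => by
    obtain ⟨P, hP0, hP⟩ := hx'_alg i
    exact isPuiseuxAlong_of_evalEval_eq_zero hP0 hτ_pos hτ (tendsto_pi_nhds.1 hx'_lim i) hP
  exact ⟨τ, x', hτ_pos, hτ, hx'_lim, hx'_puiseux, hx'_f, hx'_g⟩

theorem curve_selection_of_accPt
    (ha : AccPt a (𝓟 {x | (∀ i, MvPolynomial.eval x (F i) = 0) ∧ MvPolynomial.eval x g ≠ 0})) :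
    ∃ c : ℝ → σ → ℝ, AnalyticAt ℝ c 0 ∧ c 0 = a ∧
      (∀ᶠ t in 𝓝 0, ∀ i, MvPolynomial.eval (c t) (F i) = 0) ∧
      ∀ᶠ t in 𝓝[≠] 0, MvPolynomial.eval (c t) g ≠ 0 := by
  let S := {x | (∀ i, MvPolynomial.eval x (F i) = 0) ∧ MvPolynomial.eval x g ≠ 0}
  have : (𝓝[S \ {a}] a).NeBot := accPt_principal_iff_nhdsWithin.1 ha
  let u : Ultrafilter (σ → ℝ) := .of (𝓝[S \ {a}] a)
  have hu : ↑u ≤ 𝓝[S \ {a}] a := Ultrafilter.of_le _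
  have hS : ∀ᶠ x in u, x ∈ S \ {a} := hu self_mem_nhdsWithin
  obtain ⟨τ, x', hτ_pos, hτ, hx', hx'_puiseux, hx'_f, hx'_g⟩ :=
    exists_isPuiseuxAlong_of_eval_eq_zero (u := u) (x := id) (g := g) (a := a)
      (hS.mono fun x hx => hx.2) (hu.trans nhdsWithin_le_nhds) (hS.mono fun x hx => hx.1.2)
  obtain ⟨c, hc, hca, s, hs, hx's⟩ := hx'_puiseux.exists_curve hτ_pos hτ hx'
  have hc_eval (f : MvPolynomial σ ℝ) : AnalyticAt ℝ (fun t => MvPolynomial.eval (c t) f) 0 :=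
    .aeval_mvPolynomial (analyticAt_pi_iff.1 hc) f
  refine ⟨c, hc, hca, eventually_all.2 fun i => ?_, ?_⟩
  · rw [← (hc_eval (F i)).frequently_zero_iff_eventually_zero]
    refine hs.frequently (Eventually.frequently ?_)
    filter_upwards [hx'_f (F i) (hS.mono fun x hx => hx.1.1 i), hx's] with n hn hxn
    rwa [← hxn]
  · refine (hc_eval g).eventually_eq_zero_or_eventually_ne_zero.resolve_left fun h => ?_
    obtain ⟨n, hgn, hxn, hn⟩ :=
      (hx'_g.and (hx's.and ((hs.mono_right nhdsWithin_le_nhds).eventually h))).exists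
    exact hgn (hxn ▸ hn)

theorem curve_selection
    (ha : a ∈ closure {x | (∀ i, MvPolynomial.eval x (F i) = 0) ∧ MvPolynomial.eval x g ≠ 0}) :
    ∃ c : ℝ → σ → ℝ, AnalyticAt ℝ c 0 ∧ c 0 = a ∧
      (∀ᶠ t in 𝓝 0, ∀ i, MvPolynomial.eval (c t) (F i) = 0) ∧
      ∀ᶠ t in 𝓝[≠] 0, MvPolynomial.eval (c t) g ≠ 0 := by
  rw [closure_eq_self_union_derivedSet] at ha
  obtain ⟨hF, hg⟩ | ha := ha
  · exact ⟨fun _ => a, analyticAt_const, rfl, .of_forall fun _ => hF, .of_forall fun _ => hg⟩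
  · exact curve_selection_of_accPt ha

end

end CurveSelection

/-- Curve-selection corollary: let `Z` and `L` be algebraic sets in `ℝᵐ` (zero sets of
families of polynomials).  If `L` contains every real-analytic curve `[0,δ) → ℝᵐ` starting
at `0` and lying entirely in `Z`, then `L` contains all points of `Z` sufficiently close
to `0`. -/
theorem stmt19 (m p q : ℕ)
    (F : Fin p → MvPolynomial (Fin m) ℝ) (G : Fin q → MvPolynomial (Fin m) ℝ)
    (Z L : Set (Fin m → ℝ))
    (hZ : Z = {x | ∀ i, MvPolynomial.eval x (F i) = 0})
    (hL : L = {x | ∀ i, MvPolynomial.eval x (G i) = 0})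
    (hcurve : ∀ δ : ℝ, 0 < δ → ∀ c : ℝ → (Fin m → ℝ),
      AnalyticOn ℝ c (Set.Ico 0 δ) → c 0 = 0 →
      (∀ t ∈ Set.Ico (0 : ℝ) δ, c t ∈ Z) → ∀ t ∈ Set.Ico (0 : ℝ) δ, c t ∈ L) :
    ∃ ε > 0, ∀ x ∈ Z, ‖x‖ < ε → x ∈ L := by
  let g : MvPolynomial (Fin m) ℝ := ∑ i, G i ^ 2
  have hg (x) : MvPolynomial.eval x g = 0 ↔ x ∈ L := by
    simp [g, hL, Finset.sum_eq_zero_iff_of_nonneg, sq_nonneg]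
  suffices (0 : Fin m → ℝ) ∉ closure {x | x ∈ Z ∧ MvPolynomial.eval x g ≠ 0} by
    simpa [Metric.mem_closure_iff, hg, not_lt, not_imp_comm, ← not_le] using this
  intro h0
  rw [hZ] at h0
  obtain ⟨c, hc, hc0, hcF, hcg⟩ := curve_selection h0
  obtain ⟨δ, hδ, hball⟩ := Metric.eventually_nhds_iff.1 (hcF.and hc.eventually_analyticAt)
  have hIco {t : ℝ} (ht : t ∈ Set.Ico 0 δ) : dist t 0 < δ := by
    rw [Real.dist_0_eq_abs, abs_of_nonneg ht.1]
    exact ht.2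
  have hcL := hcurve δ hδ c (fun t ht => (hball (hIco ht)).2.analyticWithinAt) hc0
    fun t ht => hZ ▸ (hball (hIco ht)).1
  obtain ⟨t, ht, hgt⟩ := ((eventually_mem_set.2 (Ioo_mem_nhdsGT hδ)).and
    (hcg.filter_mono (nhdsGT_le_nhdsNE 0))).exists
  exact hgt ((hg _).2 (hcL t ⟨ht.1.le, ht.2⟩))
end
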